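/- arXiv:2605.08358 — 2 statements merged into one kernel-verified Lean document; each statement's English description precedes it below -/
import Mathlib

section
/- For every N ∈ ℕ and every γ > 0 there exists a function Φ that maps each finite sequence (q_1,…,q_t) of row vectors in ℝ^N to either an N×N positive semidefinite matrix or to the symbol FAIL, with Φ(empty sequence) = γ²·I, such that for every finite sequence (q_1,…,q_m) of row vectors in ℝ^N the following hold for each t ∈ {1,…,m}: (i) if Φ(q_1,…,q_{t−1}) = FAIL then Φ(q_1,…,q_t) = FAIL; (ii) if Φ(q_1,…,q_t) is a matrix X_t (so that by (i) X_{t−1} := Φ(q_1,…,q_{t−1}) is also a matrix, with X_0 = γ²·I), then X_{t−1} ⪯ X_t, X_t ⪰ q_tᵀq_t, and tr(X_t) ≤ 3γ²N; (iii) if Φ(q_1,…,q_{t−1}) is a matrix but Φ(q_1,…,q_t) = FAIL, then every N×N positive semidefinite matrix X satisfying X ⪰ q_iᵀq_i for all i ∈ {1,…,t} has tr(X) > γ²N. -/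
open Matrix

/-!
Process the rows one at a time, replacing the current matrix `X` by a positive definite `X'` with
`X'² = X² + w q qᵀ`, where `w = 0` if already `q qᵀ ≤ X`, and otherwise `w` is such that
`qᵀ X'⁻¹ q = 1`, which just ensures `q qᵀ ≤ X'`. The square root is operator monotone, so `X ≤ X'`.

The point is a bound on the trace by that of any competitor. For positive definite `Z` and
Hermitian `X`, expanding `0 ≤ tr ((Z - X) Z⁻¹ (Z - X))` gives `2 tr X ≤ tr Z + tr (X² Z⁻¹)`.
As `X'² X'⁻¹ = X'` and `w qᵀ X'⁻¹ q = w`, taking `Z = X'` shows that an update has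
`w ≤ 2 (tr X' - tr X)`. If `Z` dominates all the rows, then `qᵀ Z⁻¹ q ≤ 1`, so the update raises
`tr (X² Z⁻¹)` by `w qᵀ Z⁻¹ q ≤ w`. Starting from `P`, we thus always have
`tr (X² Z⁻¹) ≤ tr (P² Z⁻¹) + 2 (tr X - tr P)`. For a competitor `Y`, take `Z = Y + P / 2`, so that
`tr (P² Z⁻¹) ≤ 2 tr P`, and combine with `tr X ≤ tr Z + tr (X² Z⁻¹) / 4`: this gives
`tr X ≤ tr P + 2 tr Y`. So the algorithm can declare failure once `tr X` exceeds `tr P + 2 τ`.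
-/

section LoewnerOrder

open scoped ComplexOrder MatrixOrder

variable {m n 𝕜 : Type*} [Fintype m] [Fintype n] [RCLike 𝕜]

-- An eigenvector of `B - A` with eigenvalue `l < 0` would give `B² - A²` the quadratic form
-- `2 l ⟨v, B v⟩ - l² ⟨v, v⟩ < 0`.
theorem le_of_mul_self_le_mul_self_of_posSemidef {A B : Matrix n n 𝕜} (hA : A.IsHermitian)
    (hB : B.PosSemidef) (h : A * A ≤ B * B) : A ≤ B := by
  classical
  have hD : (B - A).IsHermitian := hB.isHermitian.sub hA
  rw [le_iff, hD.posSemidef_iff_eigenvalues_nonneg]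
  intro i
  by_contra! hneg
  set l : ℝ := hD.eigenvalues i
  set v : n → 𝕜 := (hD.eigenvectorBasis i).ofLp with hv
  have hDv : (B - A) *ᵥ v = (l : 𝕜) • v := by
    rw [hv, hD.mulVec_eigenvectorBasis i]
    exact RCLike.real_smul_eq_coe_smul _ _
  have hvD : star v ᵥ* (B - A) = (l : 𝕜) • star v := by
    rw [← hD.eq, ← star_mulVec, hDv, star_smul, RCLike.star_def, RCLike.conj_ofReal]
  have hvv : 0 < star v ⬝ᵥ v := by
    rw [dotProduct_star_self_pos_iff]
    simpa [v] using hD.eigenvectorBasis.orthonormal.ne_zero i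
  have hsplit : B * B - A * A = B * (B - A) + (B - A) * B - (B - A) * (B - A) := by noncomm_ring
  have hquad : star v ⬝ᵥ (B * B - A * A) *ᵥ v =
      2 * ((l : 𝕜) * (star v ⬝ᵥ B *ᵥ v)) - (l : 𝕜) ^ 2 * (star v ⬝ᵥ v) := by
    rw [hsplit, sub_mulVec, add_mulVec, ← mulVec_mulVec, ← mulVec_mulVec, ← mulVec_mulVec, hDv,
      dotProduct_sub, dotProduct_add, dotProduct_mulVec _ (B - A), dotProduct_mulVec _ (B - A), hvD,
      mulVec_smul]
    simp only [dotProduct_smul, smul_dotProduct, smul_eq_mul]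
    ring
  have hl : (l : 𝕜) < 0 := by simpa using hneg
  have hBv : (l : 𝕜) * (star v ⬝ᵥ B *ᵥ v) ≤ 0 :=
    mul_nonpos_of_nonpos_of_nonneg hl.le (hB.dotProduct_mulVec_nonneg v)
  have hlv : 0 < (l : 𝕜) ^ 2 * (star v ⬝ᵥ v) := mul_pos (by simpa using sq_pos_of_neg hl) hvv
  refine ((le_iff.1 h).dotProduct_mulVec_nonneg v).not_gt ?_
  rw [hquad]
  linear_combination 2 * hBv + hlv

variable [DecidableEq m] [DecidableEq n]

-- Both sides say that the block matrix `[A, B; Bᴴ, D]` is positive semidefinite.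
theorem mul_inv_mul_conjTranspose_le_iff {A : Matrix m m 𝕜} {D : Matrix n n 𝕜}
    (hA : A.PosDef) (hD : D.PosDef) (B : Matrix m n 𝕜) :
    B * D⁻¹ * Bᴴ ≤ A ↔ Bᴴ * A⁻¹ * B ≤ D := by
  have := hA.isUnit.invertible
  have := hD.isUnit.invertible
  rw [le_iff, le_iff, ← hD.fromBlocks₂₂, ← hA.fromBlocks₁₁]

theorem vecMulVec_star_le_iff {A : Matrix n n 𝕜} (hA : A.PosDef) (q : n → 𝕜) :
    vecMulVec q (star q) ≤ A ↔ star q ⬝ᵥ A⁻¹ *ᵥ q ≤ 1 := by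
  have h := mul_inv_mul_conjTranspose_le_iff hA (PosDef.one (n := Unit)) (replicateCol Unit q)
  have hscalar : (replicateCol Unit q)ᴴ * A⁻¹ * replicateCol Unit q =
      diagonal fun _ ↦ star q ⬝ᵥ A⁻¹ *ᵥ q := by
    rw [Matrix.mul_assoc, ← replicateCol_mulVec, conjTranspose_replicateCol]
    ext
    simp
  rw [hscalar, ← diagonal_one, le_iff, le_iff, diagonal_sub, posSemidef_diagonal_iff] at h
  simpa [le_iff, ← vecMulVec_eq] using h

theorem two_mul_trace_le {Z X : Matrix n n 𝕜} (hZ : Z.PosDef) (hX : X.IsHermitian) :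
    2 * X.trace ≤ Z.trace + (X * X * Z⁻¹).trace := by
  have hZu : IsUnit Z.det := (isUnit_iff_isUnit_det Z).1 hZ.isUnit
  have hexp : (Z - X)ᴴ * Z⁻¹ * (Z - X) = Z - X - X + X * Z⁻¹ * X := by
    rw [(hZ.isHermitian.sub hX).eq, Matrix.sub_mul, mul_nonsing_inv Z hZu, Matrix.mul_sub,
      Matrix.sub_mul, Matrix.sub_mul, nonsing_inv_mul_cancel_right _ X hZu]
    noncomm_ring
  have h := (hZ.inv.posSemidef.conjTranspose_mul_mul_same (Z - X)).trace_nonneg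
  rw [hexp, trace_add, trace_sub, trace_sub, trace_mul_cycle X] at h
  linear_combination h

theorem trace_mul_self_mul_inv_le_trace {Q Z : Matrix n n 𝕜} (hQ : Q.PosDef) (hZ : Z.PosDef)
    (h : Q ≤ Z) : (Q * Q * Z⁻¹).trace ≤ Q.trace := by
  have hQu : IsUnit Q.det := (isUnit_iff_isUnit_det Q).1 hQ.isUnit
  have hle : Q * Z⁻¹ * Q ≤ Q := by
    simpa [hQ.isHermitian.eq, mul_nonsing_inv Q hQu, h] using
      mul_inv_mul_conjTranspose_le_iff hZ hQ Q
  rw [← trace_mul_cycle]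
  exact (tracePositiveLinearMap n ℝ 𝕜).monotone' hle

end LoewnerOrder

section TightUpdate

open scoped MatrixOrder

theorem posSemidef_vecMulVec_self {n : Type*} [Finite n] (q : n → ℝ) :
    (vecMulVec q q).PosSemidef := by
  simpa using posSemidef_vecMulVec_self_star q

variable {n : Type*} [Fintype n]

theorem trace_mul_self_mul_of_add_smul_vecMulVec {X X' : Matrix n n ℝ} {q : n → ℝ} {w : ℝ}
    (h : X' * X' = X * X + w • vecMulVec q q) (M : Matrix n n ℝ) :
    (X' * X' * M).trace = (X * X * M).trace + w * (q ⬝ᵥ M *ᵥ q) := by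
  rw [h, Matrix.add_mul, trace_add, smul_mul, trace_smul, vecMulVec_mul, trace_vecMulVec,
    dotProduct_comm, ← dotProduct_mulVec, smul_eq_mul]

theorem posDef_mul_self_add_smul_vecMulVec {X : Matrix n n ℝ} (hX : X.PosDef) (q : n → ℝ)
    {w : ℝ} (hw : 0 ≤ w) : (X * X + w • vecMulVec q q).PosDef := by
  have hXX : (X * X).PosDef := by
    classical
    have := PosDef.conjTranspose_mul_self X (mulVec_injective_of_isUnit hX.isUnit)
    rwa [hX.isHermitian.eq] at this
  exact hXX.add_posSemidef ((posSemidef_vecMulVec_self q).smul hw)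

variable [DecidableEq n]

/-- `X'` is the tight update of `X` by the row `q`, with weight `w`: this is the system of
optimality conditions for minimizing `tr X' + tr (X² X'⁻¹)` subject to `q qᵀ ≤ X'`, with `w` the
multiplier of the constraint `qᵀ X'⁻¹ q ≤ 1` equivalent to `q qᵀ ≤ X'`. -/
structure IsTightUpdate (X : Matrix n n ℝ) (q : n → ℝ) (w : ℝ) (X' : Matrix n n ℝ) : Prop where
  posDef : X'.PosDef
  weight_nonneg : 0 ≤ w
  mul_self_eq : X' * X' = X * X + w • vecMulVec q q
  vecMulVec_le : vecMulVec q q ≤ X'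
  slackness : w * (q ⬝ᵥ X'⁻¹ *ᵥ q) = w

theorem vecMulVec_le_iff {X : Matrix n n ℝ} (hX : X.PosDef) (q : n → ℝ) :
    vecMulVec q q ≤ X ↔ q ⬝ᵥ X⁻¹ *ᵥ q ≤ 1 := by
  simpa using vecMulVec_star_le_iff hX q

namespace IsTightUpdate

variable {X X' : Matrix n n ℝ} {q : n → ℝ} {w : ℝ}

theorem le (h : IsTightUpdate X q w X') (hX : X.IsHermitian) : X ≤ X' := by
  refine le_of_mul_self_le_mul_self_of_posSemidef hX h.posDef.posSemidef ?_
  rw [h.mul_self_eq, le_add_iff_nonneg_right]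
  exact ((posSemidef_vecMulVec_self q).smul h.weight_nonneg).nonneg

theorem weight_le (h : IsTightUpdate X q w X') (hX : X.IsHermitian) :
    w ≤ 2 * (X'.trace - X.trace) := by
  have hdual := two_mul_trace_le h.posDef hX
  have hX' : (X' * X' * X'⁻¹).trace = X'.trace := by
    rw [mul_nonsing_inv_cancel_right X' X' ((isUnit_iff_isUnit_det X').1 h.posDef.isUnit)]
  rw [trace_mul_self_mul_of_add_smul_vecMulVec h.mul_self_eq, h.slackness] at hX'
  linarith

end IsTightUpdate

theorem posDef_sqrt {A : Matrix n n ℝ} (hA : A.PosDef) : (CFC.sqrt A).PosDef :=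
  (IsStrictlyPositive.sqrt A hA.isStrictlyPositive).posDef

open scoped Matrix.Norms.L2Operator in
theorem continuousOn_dotProduct_sqrt_inv_mulVec (q : n → ℝ) :
    ContinuousOn (fun A : Matrix n n ℝ ↦ q ⬝ᵥ (CFC.sqrt A)⁻¹ *ᵥ q) {A | A.PosDef} := by
  have hsqrt : ContinuousOn CFC.sqrt {A : Matrix n n ℝ | A.PosDef} :=
    CFC.continuousOn_sqrt.mono fun A (hA : A.PosDef) ↦ hA.posSemidef.nonneg
  have hinv : ContinuousOn (fun A : Matrix n n ℝ ↦ (CFC.sqrt A)⁻¹) {A | A.PosDef} := by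
    intro A hA
    obtain ⟨u, hu⟩ := (posDef_sqrt hA).isUnit
    simp only [nonsing_inv_eq_ringInverse]
    exact (hu ▸ NormedRing.inverse_continuousAt u).comp_continuousWithinAt (hsqrt A hA)
  fun_prop

theorem vecMulVec_le_sqrt {X : Matrix n n ℝ} (hX : X.PosDef) (q : n → ℝ) :
    vecMulVec q q ≤ CFC.sqrt (X * X + (q ⬝ᵥ q) • vecMulVec q q) := by
  have hq : 0 ≤ q ⬝ᵥ q := by simpa using dotProduct_star_self_nonneg q
  have hM := posDef_mul_self_add_smul_vecMulVec hX q hq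
  have hqq : vecMulVec q q * vecMulVec q q = (q ⬝ᵥ q) • vecMulVec q q := by
    rw [vecMulVec_mul_vecMulVec, vecMulVec_smul]
  have hXX : 0 ≤ X * X := by
    simpa using (posDef_mul_self_add_smul_vecMulVec hX q le_rfl).posSemidef.nonneg
  refine le_of_mul_self_le_mul_self_of_posSemidef (posSemidef_vecMulVec_self q).isHermitian
    (posDef_sqrt hM).posSemidef ?_
  rw [CFC.sqrt_mul_sqrt_self _ hM.posSemidef.nonneg, hqq]
  exact le_add_of_nonneg_left hXX

theorem exists_isTightUpdate {X : Matrix n n ℝ} (hX : X.PosDef) (q : n → ℝ) :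
    ∃ X' w, IsTightUpdate X q w X' := by
  by_cases hq : vecMulVec q q ≤ X
  · exact ⟨X, 0, hX, le_rfl, by simp, hq, by simp⟩
  set M : ℝ → Matrix n n ℝ := fun w ↦ X * X + w • vecMulVec q q
  set g : ℝ → ℝ := fun w ↦ q ⬝ᵥ (CFC.sqrt (M w))⁻¹ *ᵥ q
  have hqq : 0 ≤ q ⬝ᵥ q := by simpa using dotProduct_star_self_nonneg q
  have hM {w : ℝ} (hw : 0 ≤ w) : (M w).PosDef := posDef_mul_self_add_smul_vecMulVec hX q hw
  have hstart : 1 ≤ g 0 := by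
    have hsqrt : CFC.sqrt (M 0) = X := by
      simpa [M] using CFC.sqrt_mul_self X hX.posSemidef.nonneg
    simp only [g, hsqrt]
    exact (not_le.1 (mt (vecMulVec_le_iff hX q).2 hq)).le
  have hend : g (q ⬝ᵥ q) ≤ 1 :=
    (vecMulVec_le_iff (posDef_sqrt (hM hqq)) q).1 (vecMulVec_le_sqrt hX q)
  have hg : ContinuousOn g (Set.Icc 0 (q ⬝ᵥ q)) :=
    (continuousOn_dotProduct_sqrt_inv_mulVec q).comp (by fun_prop) fun w hw ↦ hM hw.1
  obtain ⟨w, ⟨hw, -⟩, hgw⟩ := intermediate_value_Icc' hqq hg ⟨hend, hstart⟩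
  have hS := posDef_sqrt (hM hw)
  exact ⟨CFC.sqrt (M w), w, hS, hw, CFC.sqrt_mul_sqrt_self _ (hM hw).posSemidef.nonneg,
    (vecMulVec_le_iff hS q).2 hgw.le,
    by rw [show q ⬝ᵥ (CFC.sqrt (M w))⁻¹ *ᵥ q = 1 from hgw, mul_one]⟩

/-- `IsTrajectory P l X` says that `X` is reached from `P` by tight updates by the successive rows
in `l`. -/
inductive IsTrajectory (P : Matrix n n ℝ) : List (n → ℝ) → Matrix n n ℝ → Prop
  | nil : IsTrajectory P [] P
  | snoc {l : List (n → ℝ)} {q : n → ℝ} {w : ℝ} {X X' : Matrix n n ℝ} :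
    IsTrajectory P l X → IsTightUpdate X q w X' → IsTrajectory P (l ++ [q]) X'

namespace IsTrajectory

variable {P X : Matrix n n ℝ} {l : List (n → ℝ)}

theorem posDef (h : IsTrajectory P l X) (hP : P.PosDef) : X.PosDef := by
  cases h with
  | nil => exact hP
  | snoc _ hX => exact hX.posDef

theorem trace_mul_self_mul_inv_le (h : IsTrajectory P l X) (hP : P.PosDef) {Z : Matrix n n ℝ}
    (hZ : Z.PosDef) (hl : ∀ p ∈ l, vecMulVec p p ≤ Z) :
    (X * X * Z⁻¹).trace ≤ (P * P * Z⁻¹).trace + 2 * (X.trace - P.trace) := by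
  induction h with
  | nil => simp
  | @snoc l q w X X' h hX' ih =>
    have hprev := ih fun p hp ↦ hl p (List.mem_append_left _ hp)
    have hqZ : q ⬝ᵥ Z⁻¹ *ᵥ q ≤ 1 := (vecMulVec_le_iff hZ q).1 (hl q (by simp))
    have hgain : w * (q ⬝ᵥ Z⁻¹ *ᵥ q) ≤ w := mul_le_of_le_one_right hX'.weight_nonneg hqZ
    have hcost := hX'.weight_le (h.posDef hP).isHermitian
    rw [trace_mul_self_mul_of_add_smul_vecMulVec hX'.mul_self_eq]
    linarith

theorem trace_le (h : IsTrajectory P l X) (hP : P.PosDef) {Y : Matrix n n ℝ}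
    (hY : Y.PosSemidef) (hl : ∀ p ∈ l, vecMulVec p p ≤ Y) :
    X.trace ≤ P.trace + 2 * Y.trace := by
  set Q : Matrix n n ℝ := (1 / 2 : ℝ) • P
  set Z : Matrix n n ℝ := Y + Q
  have hQ : Q.PosDef := hP.smul (by norm_num)
  have hZ : Z.PosDef := hQ.posSemidef_add hY
  have hdual := two_mul_trace_le hZ ((h.posDef hP).smul (one_half_pos (α := ℝ))).isHermitian
  have hpotential := h.trace_mul_self_mul_inv_le hP hZ fun p hp ↦
    (hl p hp).trans (le_add_of_nonneg_right hQ.posSemidef.nonneg)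
  have hstart := trace_mul_self_mul_inv_le_trace hQ hZ (le_add_of_nonneg_left hY.nonneg)
  simp only [Z, Q, smul_mul, Matrix.mul_smul, trace_smul, trace_add, smul_eq_mul]
    at hdual hpotential hstart
  linarith

end IsTrajectory

/-- A choice of tight update of `X` by the row `q`; arbitrary if there is none, which does not
happen for positive definite `X`. -/
noncomputable def tightUpdate (X : Matrix n n ℝ) (q : n → ℝ) : Matrix n n ℝ :=
  Classical.epsilon fun X' ↦ ∃ w, IsTightUpdate X q w X'

theorem exists_isTightUpdate_tightUpdate {X : Matrix n n ℝ} (hX : X.PosDef) (q : n → ℝ) :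
    ∃ w, IsTightUpdate X q w (tightUpdate X q) :=
  Classical.epsilon_spec (exists_isTightUpdate hX q)

/-- The streaming algorithm: starting from `P`, update tightly by the rows in `l` one after the
other, and fail for good, encoded as `none`, as soon as the trace exceeds `B`. -/
noncomputable def boundedRun (P : Matrix n n ℝ) (B : ℝ) (l : List (n → ℝ)) :
    Option (Matrix n n ℝ) :=
  l.foldlM (fun X q ↦ if (tightUpdate X q).trace ≤ B then some (tightUpdate X q) else none) P

theorem boundedRun_append_singleton (P : Matrix n n ℝ) (B : ℝ) (l : List (n → ℝ)) (q : n → ℝ) :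
    boundedRun P B (l ++ [q]) = (boundedRun P B l).bind fun X ↦
      if (tightUpdate X q).trace ≤ B then some (tightUpdate X q) else none := by
  simp [boundedRun, List.foldlM_append]

theorem boundedRun_append_singleton_eq_some_iff {P X' : Matrix n n ℝ} {B : ℝ} {l : List (n → ℝ)}
    {q : n → ℝ} : boundedRun P B (l ++ [q]) = some X' ↔
      ∃ X, boundedRun P B l = some X ∧ tightUpdate X q = X' ∧ X'.trace ≤ B := by
  rw [boundedRun_append_singleton]
  simp only [Option.bind_eq_some_iff, Option.ite_none_right_eq_some, Option.some.injEq]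
  grind

theorem isTrajectory_of_boundedRun_eq_some {P X : Matrix n n ℝ} (hP : P.PosDef) {B : ℝ}
    {l : List (n → ℝ)} (h : boundedRun P B l = some X) : IsTrajectory P l X := by
  induction l using List.reverseRecOn generalizing X with
  | nil =>
    obtain rfl : P = X := by simpa [boundedRun] using h
    exact .nil
  | append_singleton l q ih =>
    obtain ⟨X₀, h₀, rfl, -⟩ := boundedRun_append_singleton_eq_some_iff.1 h
    obtain ⟨w, hw⟩ := exists_isTightUpdate_tightUpdate ((ih h₀).posDef hP) q
    exact (ih h₀).snoc hw

end TightUpdate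

theorem stmt4_general {n : Type*} [Fintype n] {P : Matrix n n ℝ} (hP : P.PosDef) (τ : ℝ) :
    ∃ Φ : List (n → ℝ) → Option (Matrix n n ℝ),
      Φ [] = some P ∧
      (∀ l X, Φ l = some X → X.PosSemidef) ∧
      (∀ l q, Φ l = none → Φ (l ++ [q]) = none) ∧
      (∀ l q X, Φ (l ++ [q]) = some X →
        ∃ X₀, Φ l = some X₀ ∧ (X - X₀).PosSemidef ∧
          (X - vecMulVec q q).PosSemidef ∧ X.trace ≤ P.trace + 2 * τ) ∧
      (∀ l q, (∃ X₀, Φ l = some X₀) → Φ (l ++ [q]) = none →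
        ∀ X : Matrix n n ℝ, X.PosSemidef →
          (∀ p ∈ l ++ [q], (X - vecMulVec p p).PosSemidef) → τ < X.trace) := by
  classical
  have htraj {l X} := isTrajectory_of_boundedRun_eq_some hP (B := P.trace + 2 * τ) (l := l) (X := X)
  refine ⟨boundedRun P (P.trace + 2 * τ), rfl, fun l X h ↦ ((htraj h).posDef hP).posSemidef,
    fun l q h ↦ by simp [boundedRun_append_singleton, h], fun l q X h ↦ ?_, ?_⟩
  · obtain ⟨X₀, h₀, rfl, htr⟩ := boundedRun_append_singleton_eq_some_iff.1 h
    have hX₀ := (htraj h₀).posDef hP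
    obtain ⟨w, hw⟩ := exists_isTightUpdate_tightUpdate hX₀ q
    exact ⟨X₀, h₀, hw.le hX₀.isHermitian, hw.vecMulVec_le, htr⟩
  · rintro l q ⟨X₀, h₀⟩ hfail Y hY hrows
    obtain ⟨w, hw⟩ := exists_isTightUpdate_tightUpdate ((htraj h₀).posDef hP) q
    have hexceeds : P.trace + 2 * τ < (tightUpdate X₀ q).trace := by
      simpa [boundedRun_append_singleton, h₀] using hfail
    have hbound := ((htraj h₀).snoc hw).trace_le hP hY hrows
    linarith

theorem stmt4 (N : ℕ) (γ : ℝ) (hγ : 0 < γ) :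
    ∃ Φ : List (Fin N → ℝ) → Option (Matrix (Fin N) (Fin N) ℝ),
      -- the initial matrix is γ²·I
      Φ [] = some (γ ^ 2 • (1 : Matrix (Fin N) (Fin N) ℝ)) ∧
      -- every matrix output is positive semidefinite
      (∀ l X, Φ l = some X → X.PosSemidef) ∧
      -- (i) FAIL propagates
      (∀ l q, Φ l = none → Φ (l ++ [q]) = none) ∧
      -- (ii) if a matrix is output, it extends the previous one, dominates qᵀq,
      -- and has trace at most 3γ²N
      (∀ l q X, Φ (l ++ [q]) = some X →
        ∃ X₀, Φ l = some X₀ ∧ (X - X₀).PosSemidef ∧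
          (X - vecMulVec q q).PosSemidef ∧ X.trace ≤ 3 * γ ^ 2 * N) ∧
      -- (iii) if FAIL is first declared now, no PSD matrix dominating all the
      -- observed qᵀq has trace at most γ²N
      (∀ l q, (∃ X₀, Φ l = some X₀) → Φ (l ++ [q]) = none →
        ∀ X : Matrix (Fin N) (Fin N) ℝ, X.PosSemidef →
          (∀ p ∈ l ++ [q], (X - vecMulVec p p).PosSemidef) →
          γ ^ 2 * N < X.trace) := by
  have hB : 3 * γ ^ 2 * N =
      (γ ^ 2 • (1 : Matrix (Fin N) (Fin N) ℝ)).trace + 2 * (γ ^ 2 * N) := by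
    simp only [trace_smul, trace_one, Fintype.card_fin, smul_eq_mul]
    ring
  rw [hB]
  exact stmt4_general (PosDef.one.smul (by positivity)) _
end

section
/- For every c > 0 there is a constant K(c) > 0 such that for every N ∈ ℕ there exists an online factorization algorithm in the row arrival model for matrices with N columns with the following guarantee: for every m ∈ ℕ and every m×N real matrix Q with rows q_1,…,q_m such that q_1 ≠ 0, when the algorithm is run on (q_1,…,q_m) it outputs matrices R_t and row vectors ℓ_t satisfying ‖R_t‖_{1→2} ≤ 1 for every t ∈ {1,…,m} and max_{t∈{1,…,m}} ‖ℓ_t‖_2 ≤ K(c)·γ2(Q)·(1 + log₂(γ2(Q)/‖q_1‖_∞))^{1/2+c}·(log₂(2N))³. -/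
open Matrix

/-- `‖M‖_{2→∞}`: the maximum ℓ2 norm of a row of `M`. -/
noncomputable def rowNorm2inf {α β : Type*} [Fintype α] [Fintype β] (M : Matrix α β ℝ) : ℝ :=
  ⨆ i, Real.sqrt (∑ j, (M i j) ^ 2)

/-- `‖M‖_{1→2}`: the maximum ℓ2 norm of a column of `M`. -/
noncomputable def colNorm12 {α β : Type*} [Fintype α] [Fintype β] (M : Matrix α β ℝ) : ℝ :=
  ⨆ j, Real.sqrt (∑ i, (M i j) ^ 2)

/-- The γ₂ factorization norm. -/
noncomputable def gamma2 {α β : Type*} [Fintype α] [Fintype β] (A : Matrix α β ℝ) : ℝ :=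
  sInf { c : ℝ | ∃ (k : ℕ) (L : Matrix α (Fin k) ℝ) (R : Matrix (Fin k) β ℝ),
    L * R = A ∧ c = rowNorm2inf L * colNorm12 R }

/-!
Appending rows to `R` while its columns stay short means maintaining an increasing Gram matrix
`M = Rᵀ R` with diagonal at most `1`, and the least `‖ℓ‖²` with `ℓ R = q` is then `qᵀ M⁻¹ q`.

Suppose first that the queries, suitably rescaled, have `γ₂` norm at most `1`. As long as the
response `(X + s)⁻¹ q` to the current query is large at one of the dyadic scales `s`, a rank-one
term in its direction is added to the Gram matrix `X`. If `P` is the Gram matrix of an offline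
factorization, the potential `∑ s, s * tr (P (X + s)⁻¹)` then drops in proportion to the added
trace, so `tr X` stays small. A column whose diagonal entry has become too large is frozen and
ignored by the resolvents from then on. At most half of the columns get frozen, and these are
handled by a further copy of the same procedure, for `log N` levels in all. The interaction of `X`
with the frozen columns is paid for by adding the compressions of `X` to the complete dyadic blocks
of the list of frozen columns: these blocks never change later, so the output stays monotone, and
every initial segment of the list is a union of logarithmically many of them.

The unknown value of `γ₂` is guessed as `2 ^ (k + 1) * ‖q₁‖` for all `k` simultaneously, and the
resulting Gram matrices are superposed with summable weights proportional to
`(1 + k) ^ (-(1 + 2 * c))`; a correct guess has `k` of the order of `log₂ (γ₂ / ‖q₁‖)`.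
-/

namespace OnlineFactorization

variable {ι : Type*}

section Mask

variable [DecidableEq ι]

/-- The indicator vector of a set of coordinates. -/
def mask (J : Finset ι) : ι → ℝ := fun j => if j ∈ J then 1 else 0

lemma mask_mul_apply (J : Finset ι) (y : ι → ℝ) (j : ι) :
    (mask J * y) j = if j ∈ J then y j else 0 := by
  simp only [mask, Pi.mul_apply, ite_mul, one_mul, zero_mul]

lemma mask_mul_eq_self {J : Finset ι} {y : ι → ℝ} (hy : ∀ j ∉ J, y j = 0) : mask J * y = y := by
  ext j
  rw [mask_mul_apply]
  split_ifs with hj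
  exacts [rfl, (hy j hj).symm]

lemma mask_mul_apply_of_notMem {J : Finset ι} {j : ι} (hj : j ∉ J) (y : ι → ℝ) :
    (mask J * y) j = 0 := by
  rw [mask_mul_apply, if_neg hj]

lemma mask_mul_mask (J K : Finset ι) : mask J * mask K = mask (J ∩ K) := by
  ext j
  simp only [mask_mul_apply, mask, Finset.mem_inter, ite_and]

lemma mask_sdiff_add_mask {J K : Finset ι} (h : K ⊆ J) : mask (J \ K) + mask K = mask J := by
  ext j
  by_cases hj : j ∈ K
  · simp [mask, hj, h hj]
  · simp [mask, hj]

lemma mask_mul_dotProduct [Fintype ι] {J : Finset ι} {y : ι → ℝ} (hy : ∀ j ∉ J, y j = 0)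
    (q : ι → ℝ) : (mask J * q) ⬝ᵥ y = q ⬝ᵥ y := by
  conv_rhs => rw [← mask_mul_eq_self hy]
  exact Finset.sum_congr rfl fun j _ => by simp only [Pi.mul_apply]; ring

lemma mask_mul_dotProduct_self_le [Fintype ι] (J : Finset ι) (y : ι → ℝ) :
    (mask J * y) ⬝ᵥ (mask J * y) ≤ y ⬝ᵥ y := by
  refine Finset.sum_le_sum fun j _ => ?_
  rw [mask_mul_apply]
  split_ifs
  exacts [le_rfl, by simpa using mul_self_nonneg (y j)]

end Mask

section DyadicBlocks

/-- The `c`-th block of length `2 ^ h` of a list (truncated if the list ends within it). -/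
def dyadicBlock (L : List ι) (h c : ℕ) : List ι := (L.drop (c * 2 ^ h)).take (2 ^ h)

lemma dyadicBlock_sublist (L : List ι) (h c : ℕ) : (dyadicBlock L h c).Sublist L :=
  (List.take_sublist _ _).trans (List.drop_sublist _ _)

lemma dyadicBlock_append (L L' : List ι) {h c : ℕ} (hc : c < L.length / 2 ^ h) :
    dyadicBlock (L ++ L') h c = dyadicBlock L h c := by
  have hend : c * 2 ^ h + 2 ^ h ≤ L.length := by
    rw [← Nat.succ_mul]
    exact (Nat.mul_le_mul_right _ hc).trans (Nat.div_mul_le_self _ _)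
  rw [dyadicBlock, List.drop_append_of_le_length (le_of_add_le_left hend),
    List.take_append_of_le_length (by rw [List.length_drop]; exact Nat.le_sub_of_add_le' hend),
    dyadicBlock]

variable [DecidableEq ι]

/-- The vector of multiplicities of a list; for a list without duplicates it is the indicator of
its set of entries. -/
def multiplicity (L : List ι) : ι → ℝ := fun j => L.count j

/-- The vector of multiplicities of the block of length `2 ^ h` in the decomposition of the list
into dyadic blocks of decreasing lengths, one for each binary digit `1` of its length. -/
noncomputable def dyadicPiece (L : List ι) (h : ℕ) : ι → ℝ :=
  if (L.length / 2 ^ h) % 2 = 1 then multiplicity (dyadicBlock L h (L.length / 2 ^ h - 1)) else 0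

lemma multiplicity_append (L L' : List ι) :
    multiplicity (L ++ L') = multiplicity L + multiplicity L' := by
  ext j; simp [multiplicity]

lemma multiplicity_nil : multiplicity ([] : List ι) = 0 := by
  ext j; simp [multiplicity]

lemma multiplicity_nonneg (L : List ι) (j : ι) : 0 ≤ multiplicity L j := Nat.cast_nonneg _

lemma multiplicity_apply_of_notMem {L : List ι} {j : ι} (hj : j ∉ L) : multiplicity L j = 0 := by
  simp [multiplicity, List.count_eq_zero_of_not_mem hj]

lemma multiplicity_le_one {L : List ι} (hL : L.Nodup) (j : ι) : multiplicity L j ≤ 1 :=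
  Nat.cast_le_one.2 (List.nodup_iff_count_le_one.1 hL j)

lemma sum_multiplicity_dyadicBlock (L : List ι) (h m : ℕ) :
    ∑ c ∈ Finset.range m, multiplicity (dyadicBlock L h c) =
      multiplicity (L.take (m * 2 ^ h)) := by
  induction m with
  | zero => simp [multiplicity_nil]
  | succ m ih =>
    rw [Finset.sum_range_succ, ih, add_mul, one_mul, List.take_add, multiplicity_append,
      dyadicBlock]

lemma multiplicity_take_eq_add_dyadicPiece (L : List ι) (h : ℕ) :
    multiplicity (L.take (2 ^ h * (L.length / 2 ^ h))) =
      multiplicity (L.take (2 ^ (h + 1) * (L.length / 2 ^ (h + 1)))) + dyadicPiece L h := by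
  have hhalf : L.length / 2 ^ (h + 1) = L.length / 2 ^ h / 2 := by
    rw [pow_succ, Nat.div_div_eq_div_mul]
  rw [hhalf, dyadicPiece]
  generalize L.length / 2 ^ h = a
  rw [pow_succ, mul_assoc]
  split_ifs with hodd
  · have ha : a = 2 * (a / 2) + 1 := by omega
    have hpred : a - 1 = 2 * (a / 2) := by omega
    conv_lhs => rw [ha, mul_add_one, List.take_add, multiplicity_append]
    rw [dyadicBlock, hpred, mul_comm (2 * (a / 2))]
  · have ha : 2 * (a / 2) = a := by omega
    rw [ha, add_zero]

lemma multiplicity_eq_sum_dyadicPiece {L : List ι} {H : ℕ} (hH : L.length < 2 ^ H) :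
    multiplicity L = ∑ h ∈ Finset.range H, dyadicPiece L h := by
  have key (m : ℕ) : multiplicity L = ∑ h ∈ Finset.range m, dyadicPiece L h +
      multiplicity (L.take (2 ^ m * (L.length / 2 ^ m))) := by
    induction m with
    | zero => simp
    | succ m ih =>
      rw [ih, Finset.sum_range_succ, multiplicity_take_eq_add_dyadicPiece, add_assoc,
        add_comm (dyadicPiece L m)]
  simpa [Nat.div_eq_of_lt hH, multiplicity_nil] using key H

end DyadicBlocks

variable [Fintype ι]

section QuadForm

/-- The quadratic form `yᵀ M y` of a square matrix. The Loewner order is used through the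
inequality `∀ y, quadForm A y ≤ quadForm B y` wherever symmetry plays no role. -/
def quadForm (M : Matrix ι ι ℝ) (y : ι → ℝ) : ℝ := y ⬝ᵥ M *ᵥ y

lemma quadForm_add (A B : Matrix ι ι ℝ) (y : ι → ℝ) :
    quadForm (A + B) y = quadForm A y + quadForm B y := by
  simp only [quadForm, add_mulVec, dotProduct_add]

lemma quadForm_sub (A B : Matrix ι ι ℝ) (y : ι → ℝ) :
    quadForm (A - B) y = quadForm A y - quadForm B y := by
  simp only [quadForm, sub_mulVec, dotProduct_sub]

lemma quadForm_smul (c : ℝ) (A : Matrix ι ι ℝ) (y : ι → ℝ) :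
    quadForm (c • A) y = c * quadForm A y := by
  simp only [quadForm, smul_mulVec, dotProduct_smul, smul_eq_mul]

lemma quadForm_sum {κ : Type*} (s : Finset κ) (A : κ → Matrix ι ι ℝ) (y : ι → ℝ) :
    quadForm (∑ k ∈ s, A k) y = ∑ k ∈ s, quadForm (A k) y := by
  simp only [quadForm, sum_mulVec, dotProduct_sum]

lemma quadForm_smul_vec (A : Matrix ι ι ℝ) (c : ℝ) (y : ι → ℝ) :
    quadForm A (c • y) = c ^ 2 * quadForm A y := by
  simp only [quadForm, mulVec_smul, smul_dotProduct, dotProduct_smul, smul_eq_mul]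
  ring

lemma quadForm_one [DecidableEq ι] (y : ι → ℝ) : quadForm 1 y = y ⬝ᵥ y := by
  simp only [quadForm, one_mulVec]

lemma quadForm_vecMulVec_self (u y : ι → ℝ) : quadForm (vecMulVec u u) y = (u ⬝ᵥ y) ^ 2 := by
  simp only [quadForm, vecMulVec_mulVec, op_smul_eq_smul, dotProduct_smul, smul_eq_mul,
    dotProduct_comm y u, sq]

lemma quadForm_transpose_mul_self {κ : Type*} [Fintype κ] (R : Matrix κ ι ℝ) (y : ι → ℝ) :
    quadForm (Rᵀ * R) y = ∑ k, (R k ⬝ᵥ y) ^ 2 := by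
  rw [quadForm, ← mulVec_mulVec, dotProduct_mulVec, vecMul_transpose]
  simp only [dotProduct, mulVec, sq]

lemma quadForm_single [DecidableEq ι] (A : Matrix ι ι ℝ) (j : ι) :
    quadForm A (Pi.single j 1) = A j j := by
  simp [quadForm]

lemma quadForm_nonneg {A : Matrix ι ι ℝ} (hA : A.PosSemidef) (y : ι → ℝ) : 0 ≤ quadForm A y :=
  hA.dotProduct_mulVec_nonneg y

lemma posSemidef_of_quadForm_nonneg {A : Matrix ι ι ℝ} (hA : A.IsHermitian)
    (h : ∀ y, 0 ≤ quadForm A y) : A.PosSemidef :=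
  .of_dotProduct_mulVec_nonneg hA h

omit [Fintype ι] in
lemma posSemidef_vecMulVec_self [Finite ι] (u : ι → ℝ) : (vecMulVec u u).PosSemidef :=
  posSemidef_vecMulVec_self_star u

lemma dotProduct_mulVec_comm {A : Matrix ι ι ℝ} (hA : A.IsHermitian) (x y : ι → ℝ) :
    x ⬝ᵥ A *ᵥ y = y ⬝ᵥ A *ᵥ x := by
  rw [dotProduct_mulVec, ← mulVec_transpose, ← conjTranspose_eq_transpose_of_trivial, hA.eq,
    dotProduct_comm]

lemma quadForm_sub_vec {A : Matrix ι ι ℝ} (hA : A.IsHermitian) (x y : ι → ℝ) :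
    quadForm A (x - y) = quadForm A x - 2 * (y ⬝ᵥ A *ᵥ x) + quadForm A y := by
  simp only [quadForm, mulVec_sub, sub_dotProduct, dotProduct_sub, dotProduct_mulVec_comm hA x y]
  ring

open scoped MatrixOrder ComplexOrder in
lemma exists_eq_transpose_mul_self {A : Matrix ι ι ℝ} (hA : A.PosSemidef) :
    ∃ R : Matrix ι ι ℝ, A = Rᵀ * R := by
  classical
  obtain ⟨R, hR⟩ := CStarAlgebra.nonneg_iff_eq_star_mul_self.mp hA.nonneg
  exact ⟨R, by rw [hR, star_eq_conjTranspose, conjTranspose_eq_transpose_of_trivial]⟩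

lemma quadForm_sum_vec_le {A : Matrix ι ι ℝ} (hA : A.PosSemidef) {κ : Type*}
    (s : Finset κ) (v : κ → ι → ℝ) :
    quadForm A (∑ k ∈ s, v k) ≤ s.card * ∑ k ∈ s, quadForm A (v k) := by
  obtain ⟨R, rfl⟩ := exists_eq_transpose_mul_self hA
  simp only [quadForm_transpose_mul_self, dotProduct_sum]
  rw [Finset.sum_comm, Finset.mul_sum]
  exact Finset.sum_le_sum fun i _ => sq_sum_le_card_mul_sum_sq

omit [Fintype ι] in
lemma abs_apply_le_one [Finite ι] {A : Matrix ι ι ℝ} (hA : A.PosSemidef) (hdiag : ∀ j, A j j ≤ 1)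
    (i j : ι) : |A i j| ≤ 1 := by
  classical
  have := Fintype.ofFinite ι
  have hsymm : A j i = A i j := hA.isHermitian.apply i j
  have hplus := quadForm_nonneg hA (Pi.single i 1 + Pi.single j 1)
  have hminus := quadForm_nonneg hA (Pi.single i 1 - Pi.single j 1)
  simp only [quadForm, mulVec_add, mulVec_sub, add_dotProduct, sub_dotProduct, dotProduct_add,
    dotProduct_sub, mulVec_single_one, col_apply, single_one_dotProduct, hsymm] at hplus hminus
  rw [abs_le]
  constructor <;> linarith [hdiag i, hdiag j]

lemma trace_transpose_mul_self_mul {κ : Type*} [Fintype κ] (R : Matrix κ ι ℝ) (A : Matrix ι ι ℝ) :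
    (Rᵀ * R * A).trace = ∑ k, quadForm A (R k) := by
  rw [Matrix.mul_assoc, trace_mul_comm]
  exact Finset.sum_congr rfl fun k _ => (dotProduct_mulVec (R k) A (R k)).symm

lemma trace_mul_le_trace_mul {P A B : Matrix ι ι ℝ} (hP : P.PosSemidef)
    (hAB : ∀ y, quadForm A y ≤ quadForm B y) : (P * A).trace ≤ (P * B).trace := by
  obtain ⟨R, rfl⟩ := exists_eq_transpose_mul_self hP
  simp only [trace_transpose_mul_self_mul]
  exact Finset.sum_le_sum fun k _ => hAB (R k)

lemma trace_mul_vecMulVec_self (P : Matrix ι ι ℝ) (w : ι → ℝ) :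
    (P * vecMulVec w w).trace = quadForm P w := by
  rw [mul_vecMulVec, trace_vecMulVec, quadForm, dotProduct_comm]

end QuadForm

section Compression

variable [DecidableEq ι]

/-- The compression `D A D` of `A` by the diagonal matrix `D` with diagonal `d`. -/
def compress (d : ι → ℝ) (A : Matrix ι ι ℝ) : Matrix ι ι ℝ := diagonal d * A * diagonal d

lemma compress_apply (d : ι → ℝ) (A : Matrix ι ι ℝ) (i j : ι) :
    compress d A i j = d i * A i j * d j := by
  rw [compress, mul_diagonal, diagonal_mul]

lemma quadForm_compress (d : ι → ℝ) (A : Matrix ι ι ℝ) (y : ι → ℝ) :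
    quadForm (compress d A) y = quadForm A (d * y) := by
  have h : ∀ z : ι → ℝ, diagonal d *ᵥ z = d * z := fun z => funext (mulVec_diagonal d z)
  rw [quadForm, compress, ← mulVec_mulVec, ← mulVec_mulVec, dotProduct_mulVec, ← mulVec_transpose,
    diagonal_transpose, h, quadForm]

lemma posSemidef_compress {A : Matrix ι ι ℝ} (hA : A.PosSemidef) (d : ι → ℝ) :
    (compress d A).PosSemidef := by
  simpa [compress] using hA.conjTranspose_mul_mul_same (diagonal d)

end Compression

section PrincipalInverse

variable [DecidableEq ι] {J : Finset ι} {S : Matrix ι ι ℝ}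

/-- The block-diagonal matrix equal to `S` on `J × J` and to the identity on the complement. -/
def principalPart (J : Finset ι) (S : Matrix ι ι ℝ) : Matrix ι ι ℝ :=
  compress (mask J) S + diagonal (mask Jᶜ)

/-- The inverse of the principal submatrix of `S` indexed by `J`, extended by zero to all of
`ι × ι`; its quadratic form at `q` is the maximum of `2 qᵀy - yᵀSy` over `y` supported on `J`. -/
noncomputable def principalInv (J : Finset ι) (S : Matrix ι ι ℝ) : Matrix ι ι ℝ :=
  compress (mask J) (principalPart J S)⁻¹

lemma posDef_principalPart (hS : S.PosDef) : (principalPart J S).PosDef := by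
  have hcompl (y : ι → ℝ) : y = mask J * y + mask Jᶜ * y := by
    ext j
    by_cases hj : j ∈ J <;> simp [mask, hj]
  refine .of_dotProduct_mulVec_pos ?_ fun y hy => ?_
  · exact (posSemidef_compress hS.posSemidef _).isHermitian.add (isHermitian_diagonal _)
  change 0 < quadForm _ y
  have hform : quadForm (principalPart J S) y =
      quadForm S (mask J * y) + (mask Jᶜ * y) ⬝ᵥ (mask Jᶜ * y) := by
    rw [principalPart, quadForm_add, quadForm_compress]
    congr 1
    exact Finset.sum_congr rfl fun j _ => by
      by_cases hj : j ∈ J <;> simp [mulVec_diagonal, mask, hj]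
  rw [hform]
  by_cases h0 : mask J * y = 0
  · have hne : mask Jᶜ * y ≠ 0 := fun h => hy (by rw [hcompl y, h0, h, add_zero])
    rw [h0]
    simpa [quadForm] using dotProduct_star_self_pos_iff.2 hne
  · exact add_pos_of_pos_of_nonneg (hS.dotProduct_mulVec_pos h0) (dotProduct_star_self_nonneg _)

lemma posSemidef_principalInv (hS : S.PosDef) : (principalInv J S).PosSemidef :=
  posSemidef_compress (posDef_principalPart hS).inv.posSemidef _

lemma principalInv_mulVec_apply_of_notMem {j : ι} (hj : j ∉ J) (q : ι → ℝ) :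
    (principalInv J S *ᵥ q) j = 0 := by
  simp [principalInv, mulVec, dotProduct, compress_apply, mask, hj]

lemma diagonal_mask_mul_mul_principalInv (hS : S.PosDef) :
    diagonal (mask J) * S * principalInv J S = diagonal (mask J) := by
  have hidem : diagonal (mask J) * diagonal (mask J) = diagonal (mask J) := by
    rw [diagonal_mul_diagonal]; congr 1; ext j; simp [mask]
  have hdisj : diagonal (mask J) * diagonal (mask Jᶜ) = 0 := by
    rw [diagonal_mul_diagonal, ← diagonal_zero]; congr 1; ext j; simp [mask]
  have hpart : diagonal (mask J) * S * diagonal (mask J) =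
      diagonal (mask J) * principalPart J S := by
    rw [principalPart, Matrix.mul_add, hdisj, add_zero, compress, ← Matrix.mul_assoc,
      ← Matrix.mul_assoc, hidem]
  have hdet := (Matrix.isUnit_iff_isUnit_det _).1 (posDef_principalPart (J := J) hS).isUnit
  calc diagonal (mask J) * S * principalInv J S
      = diagonal (mask J) * S * diagonal (mask J) * (principalPart J S)⁻¹ * diagonal (mask J) := by
        simp only [principalInv, compress, Matrix.mul_assoc]
    _ = diagonal (mask J) := by
        rw [hpart, Matrix.mul_assoc (diagonal _), mul_nonsing_inv _ hdet, Matrix.mul_one, hidem]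

lemma mask_mul_mulVec_principalInv (hS : S.PosDef) (q : ι → ℝ) :
    mask J * (S *ᵥ principalInv J S *ᵥ q) = mask J * q := by
  have h := congrArg (· *ᵥ q) (diagonal_mask_mul_mul_principalInv (J := J) hS)
  simp only [← mulVec_mulVec] at h
  ext j
  simpa only [mulVec_diagonal, Pi.mul_apply] using congrFun h j

lemma dotProduct_mulVec_principalInv (hS : S.PosDef) (q : ι → ℝ) {y : ι → ℝ}
    (hy : ∀ j ∉ J, y j = 0) : y ⬝ᵥ S *ᵥ principalInv J S *ᵥ q = q ⬝ᵥ y := by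
  rw [dotProduct_comm, ← mask_mul_dotProduct hy, mask_mul_mulVec_principalInv hS,
    mask_mul_dotProduct hy]

lemma quadForm_principalInv_mulVec (hS : S.PosDef) (q : ι → ℝ) :
    quadForm S (principalInv J S *ᵥ q) = quadForm (principalInv J S) q :=
  dotProduct_mulVec_principalInv hS q fun _ hj => principalInv_mulVec_apply_of_notMem hj q

lemma two_mul_dotProduct_sub_quadForm (hS : S.PosDef) (q : ι → ℝ) {y : ι → ℝ}
    (hy : ∀ j ∉ J, y j = 0) :
    2 * (q ⬝ᵥ y) - quadForm S y =
      quadForm (principalInv J S) q - quadForm S (principalInv J S *ᵥ q - y) := by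
  rw [quadForm_sub_vec hS.isHermitian, dotProduct_mulVec_principalInv hS q hy,
    quadForm_principalInv_mulVec hS]
  ring

lemma quadForm_principalInv_le_iff (hS : S.PosDef) (q : ι → ℝ) (C : ℝ) :
    quadForm (principalInv J S) q ≤ C ↔
      ∀ y, (∀ j ∉ J, y j = 0) → 2 * (q ⬝ᵥ y) - quadForm S y ≤ C := by
  constructor
  · intro h y hy
    rw [two_mul_dotProduct_sub_quadForm hS q hy]
    linarith [quadForm_nonneg hS.posSemidef (principalInv J S *ᵥ q - y)]
  · intro h
    have hsupp : ∀ j ∉ J, (principalInv J S *ᵥ q) j = 0 :=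
      fun j hj => principalInv_mulVec_apply_of_notMem hj q
    have hmax := h _ hsupp
    rw [two_mul_dotProduct_sub_quadForm hS q hsupp, sub_self] at hmax
    simpa [quadForm] using hmax

lemma quadForm_principalInv_mono {J' : Finset ι} (hS : S.PosDef) (hJ : J' ⊆ J) (q : ι → ℝ) :
    quadForm (principalInv J' S) q ≤ quadForm (principalInv J S) q :=
  (quadForm_principalInv_le_iff hS q _).2 fun y hy =>
    (quadForm_principalInv_le_iff hS q _).1 le_rfl y fun j hj => hy j fun hj' => hj (hJ hj')

lemma dotProduct_sq_le (hS : S.PosDef) (q : ι → ℝ) {y : ι → ℝ} (hy : ∀ j ∉ J, y j = 0) :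
    (q ⬝ᵥ y) ^ 2 ≤ quadForm (principalInv J S) q * quadForm S y := by
  have hdiscrim : ∀ t : ℝ, 0 ≤ quadForm S y * (t * t) + -2 * (q ⬝ᵥ y) * t +
      quadForm (principalInv J S) q := fun t => by
    have h := (quadForm_principalInv_le_iff (J := J) hS q _).1 le_rfl (t • y) fun j hj => by
      simp [hy j hj]
    rw [quadForm_smul_vec, dotProduct_smul, smul_eq_mul] at h
    linarith
  have h := discrim_le_zero hdiscrim
  rw [discrim] at h
  linarith

lemma quadForm_principalInv_le_div {s : ℝ} (hS : S.PosDef) (hs : 0 < s)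
    (hsS : ∀ y, s * (y ⬝ᵥ y) ≤ quadForm S y) (q : ι → ℝ) :
    quadForm (principalInv J S) q ≤ q ⬝ᵥ q / s := by
  refine (quadForm_principalInv_le_iff hS q _).2 fun y _ => ?_
  have hsq : 0 ≤ (q - s • y) ⬝ᵥ (q - s • y) := dotProduct_star_self_nonneg _
  simp only [sub_dotProduct, dotProduct_sub, smul_dotProduct, dotProduct_smul, smul_eq_mul,
    dotProduct_comm y q] at hsq
  rw [le_div_iff₀ hs]
  nlinarith [hsS y]

lemma quadForm_principalInv_le_add_smul_one {s : ℝ} (hS : S.PosDef) (hs : 0 ≤ s) (q : ι → ℝ) :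
    quadForm (principalInv J S) q ≤ quadForm (principalInv J (S + s • 1)) q +
      s * ((principalInv J S *ᵥ q) ⬝ᵥ (principalInv J S *ᵥ q)) := by
  have hsupp : ∀ j ∉ J, (principalInv J S *ᵥ q) j = 0 :=
    fun j hj => principalInv_mulVec_apply_of_notMem hj q
  have h := (quadForm_principalInv_le_iff (hS.add_posSemidef (PosSemidef.one.smul hs)) q _).1
    le_rfl _ hsupp
  rw [quadForm_add, ← sub_sub, two_mul_dotProduct_sub_quadForm hS q hsupp, sub_self,
    quadForm_smul, quadForm_one] at h
  simp only [quadForm, mulVec_zero, dotProduct_zero, sub_zero] at h ⊢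
  linarith

lemma quadForm_principalInv_add_vecMulVec_le {b : ℝ} (hS : S.PosDef) (hb : 0 ≤ b) {u : ι → ℝ}
    (hu : b * quadForm (principalInv J S) u ≤ 1) (p : ι → ℝ) :
    quadForm (principalInv J (S + b • vecMulVec u u)) p ≤
      quadForm (principalInv J S) p - b / 2 * (p ⬝ᵥ principalInv J S *ᵥ u) ^ 2 := by
  have hS' : (S + b • vecMulVec u u).PosDef :=
    hS.add_posSemidef ((posSemidef_vecMulVec_self u).smul hb)
  refine (quadForm_principalInv_le_iff hS' p _).2 fun y hy => ?_
  set e := principalInv J S *ᵥ p - y with he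
  have hsum : u ⬝ᵥ e + u ⬝ᵥ y = p ⬝ᵥ principalInv J S *ᵥ u := by
    rw [he, dotProduct_sub, sub_add_cancel,
      dotProduct_mulVec_comm (posSemidef_principalInv hS).isHermitian]
  have hsquare : b * (u ⬝ᵥ e) ^ 2 ≤ quadForm S e := by
    have hcs := dotProduct_sq_le (J := J) (y := e) hS u fun j hj => by
      simp [he, principalInv_mulVec_apply_of_notMem hj, hy j hj]
    calc b * (u ⬝ᵥ e) ^ 2 ≤ b * (quadForm (principalInv J S) u * quadForm S e) := by gcongr
      _ = b * quadForm (principalInv J S) u * quadForm S e := by ring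
      _ ≤ quadForm S e := mul_le_of_le_one_left (quadForm_nonneg hS.posSemidef e) hu
  rw [quadForm_add, quadForm_smul, quadForm_vecMulVec_self, ← sub_sub,
    two_mul_dotProduct_sub_quadForm hS p hy, ← he, ← hsum]
  nlinarith [mul_nonneg hb (sq_nonneg (u ⬝ᵥ e - u ⬝ᵥ y))]

omit [Fintype ι] in
lemma posDef_add_smul_one {X : Matrix ι ι ℝ} (hX : X.PosSemidef) {s : ℝ} (hs : 0 < s) :
    (X + s • (1 : Matrix ι ι ℝ)).PosDef :=
  PosDef.posSemidef_add hX (PosDef.one.smul hs)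

lemma quadForm_add_smul_one (X : Matrix ι ι ℝ) (s : ℝ) (y : ι → ℝ) :
    quadForm (X + s • 1) y = quadForm X y + s * (y ⬝ᵥ y) := by
  rw [quadForm_add, quadForm_smul, quadForm_one]

/-- The regularized inverse `(X + s)⁻¹` on the coordinates in `J`, extended by zero. -/
noncomputable abbrev ridgeInv (J : Finset ι) (X : Matrix ι ι ℝ) (s : ℝ) : Matrix ι ι ℝ :=
  principalInv J (X + s • 1)

variable {X : Matrix ι ι ℝ}

lemma quadForm_ridgeInv_le_div (hX : X.PosSemidef) {s : ℝ} (hs : 0 < s) (q : ι → ℝ) :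
    quadForm (ridgeInv J X s) q ≤ q ⬝ᵥ q / s :=
  quadForm_principalInv_le_div (posDef_add_smul_one hX hs) hs
    (fun y => by linarith [quadForm_add_smul_one X s y, quadForm_nonneg hX y]) q

lemma quadForm_ridgeInv_le_telescope (hX : X.PosSemidef) {b θ : ℝ} (hb : 0 < b) (q : ι → ℝ) (m : ℕ)
    (hθ : ∀ i < m, b * 2 ^ i *
      ((ridgeInv J X (b * 2 ^ i) *ᵥ q) ⬝ᵥ (ridgeInv J X (b * 2 ^ i) *ᵥ q)) ≤ θ) :
    quadForm (ridgeInv J X b) q ≤ m * θ + quadForm (ridgeInv J X (b * 2 ^ m)) q := by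
  induction m with
  | zero => simp
  | succ m ih =>
    have hs : 0 < b * 2 ^ m := by positivity
    have hdouble := quadForm_principalInv_le_add_smul_one (J := J) (posDef_add_smul_one hX hs)
      hs.le q
    rw [add_assoc, ← add_smul, show b * 2 ^ m + b * 2 ^ m = b * 2 ^ (m + 1) by ring] at hdouble
    push_cast
    linarith [ih fun i hi => hθ i (by omega), hθ m (by omega)]

lemma ridgeInv_mulVec_apply_eq_zero (hX : X.PosSemidef) {s : ℝ} (hs : 0 < s) {j : ι}
    (hrow : ∀ i, X j i = 0) {q : ι → ℝ} (hq : q j = 0) : (ridgeInv J X s *ᵥ q) j = 0 := by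
  by_cases hj : j ∈ J
  · have h := congrFun (mask_mul_mulVec_principalInv (J := J) (posDef_add_smul_one hX hs) q) j
    have hXz (z : ι → ℝ) : (X *ᵥ z) j = 0 := by simp [mulVec, dotProduct, hrow]
    rw [mask_mul_apply, mask_mul_apply, if_pos hj, if_pos hj, add_mulVec, Pi.add_apply, hXz,
      zero_add, smul_mulVec, one_mulVec, Pi.smul_apply, smul_eq_mul, hq] at h
    exact (mul_eq_zero.1 h).resolve_left hs.ne'
  · exact principalInv_mulVec_apply_of_notMem hj q

end PrincipalInverse

section DyadicCorrection

variable [DecidableEq ι]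

/-- The sum of the compressions of `X` to all complete dyadic blocks of length less than `2 ^ H`.
Blocks never change when the list grows, so this correction is monotone in time, unlike the
compression of `X` to the complement of the list. -/
noncomputable def dyadicCorrection (H : ℕ) (L : List ι) (X : Matrix ι ι ℝ) : Matrix ι ι ℝ :=
  ∑ h ∈ Finset.range H, ∑ c ∈ Finset.range (L.length / 2 ^ h),
    compress (multiplicity (dyadicBlock L h c)) X

lemma mask_compl_toFinset {L : List ι} (hL : L.Nodup) :
    mask L.toFinsetᶜ = 1 - multiplicity L := by
  ext j
  by_cases hj : j ∈ L
  · simp [mask, multiplicity, hj, List.count_eq_one_of_mem hL hj]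
  · simp [mask, hj, multiplicity_apply_of_notMem hj]

lemma quadForm_dyadicPiece_le (L : List ι) (h : ℕ) {X : Matrix ι ι ℝ} (hX : X.PosSemidef)
    (y : ι → ℝ) :
    quadForm X (dyadicPiece L h * y) ≤ ∑ c ∈ Finset.range (L.length / 2 ^ h),
      quadForm (compress (multiplicity (dyadicBlock L h c)) X) y := by
  have hnonneg (c : ℕ) : 0 ≤ quadForm (compress (multiplicity (dyadicBlock L h c)) X) y :=
    quadForm_nonneg (posSemidef_compress hX _) y
  rw [dyadicPiece]
  split_ifs with hodd
  · rw [← quadForm_compress]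
    refine Finset.single_le_sum
      (f := fun c => quadForm (compress (multiplicity (dyadicBlock L h c)) X) y)
      (fun c _ => hnonneg c) (Finset.mem_range.2 (Nat.sub_one_lt fun h0 => ?_))
    simp [h0] at hodd
  · simpa [quadForm] using Finset.sum_nonneg fun c _ => hnonneg c

lemma posSemidef_dyadicCorrection (H : ℕ) (L : List ι) {X : Matrix ι ι ℝ} (hX : X.PosSemidef) :
    (dyadicCorrection H L X).PosSemidef :=
  posSemidef_sum _ fun _ _ => posSemidef_sum _ fun _ _ => posSemidef_compress hX _

lemma quadForm_mask_compl_le {H : ℕ} {L : List ι} (hL : L.Nodup) (hH : L.length < 2 ^ H)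
    {X : Matrix ι ι ℝ} (hX : X.PosSemidef) (y : ι → ℝ) :
    quadForm X (mask L.toFinsetᶜ * y) ≤
      (H + 1) * (quadForm X y + quadForm (dyadicCorrection H L X) y) := by
  let v : ℕ → ι → ℝ := fun i => Nat.casesOn i y fun h => (-1 : ℝ) • (dyadicPiece L h * y)
  have hdecomp : mask L.toFinsetᶜ * y = ∑ i ∈ Finset.range (H + 1), v i := by
    rw [mask_compl_toFinset hL, multiplicity_eq_sum_dyadicPiece hH, Finset.sum_range_succ',
      ← Finset.smul_sum, ← Finset.sum_mul, sub_mul, one_mul, neg_one_smul, neg_add_eq_sub]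
    rfl
  have hv (h : ℕ) : quadForm X (v (h + 1)) = quadForm X (dyadicPiece L h * y) := by
    simp only [v, quadForm_smul_vec]
    ring
  calc quadForm X (mask L.toFinsetᶜ * y)
      ≤ (H + 1) * ∑ i ∈ Finset.range (H + 1), quadForm X (v i) := by
        rw [hdecomp]
        exact_mod_cast Finset.card_range (H + 1) ▸ quadForm_sum_vec_le hX _ v
    _ ≤ (H + 1) * (quadForm X y + quadForm (dyadicCorrection H L X) y) := by
        rw [Finset.sum_range_succ', add_comm (Finset.sum _ _), dyadicCorrection, quadForm_sum]
        refine mul_le_mul_of_nonneg_left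
          (add_le_add le_rfl (Finset.sum_le_sum fun h _ => ?_)) (by positivity)
        rw [hv, quadForm_sum]
        exact quadForm_dyadicPiece_le L h hX y

lemma sum_compress_dyadicBlock_apply_le {L : List ι} (hL : L.Nodup) (h : ℕ) {X : Matrix ι ι ℝ}
    (hX : X.PosSemidef) (j : ι) :
    ∑ c ∈ Finset.range (L.length / 2 ^ h), compress (multiplicity (dyadicBlock L h c)) X j j ≤
      X j j := by
  have hXj : 0 ≤ X j j := hX.diag_nonneg
  have hterm (c : ℕ) : compress (multiplicity (dyadicBlock L h c)) X j j ≤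
      multiplicity (dyadicBlock L h c) j * X j j := by
    rw [compress_apply]
    exact mul_le_of_le_one_right (mul_nonneg (multiplicity_nonneg _ j) hXj)
      (multiplicity_le_one (hL.sublist (dyadicBlock_sublist L h c)) j)
  calc _ ≤ ∑ c ∈ Finset.range (L.length / 2 ^ h), multiplicity (dyadicBlock L h c) j * X j j :=
        Finset.sum_le_sum fun c _ => hterm c
    _ = multiplicity (L.take (L.length / 2 ^ h * 2 ^ h)) j * X j j := by
        rw [← Finset.sum_mul, ← sum_multiplicity_dyadicBlock, Finset.sum_apply]
    _ ≤ X j j := mul_le_of_le_one_left hXj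
        (multiplicity_le_one (hL.sublist (List.take_sublist _ _)) j)

lemma dyadicCorrection_apply_le (H : ℕ) {L : List ι} (hL : L.Nodup) {X : Matrix ι ι ℝ}
    (hX : X.PosSemidef) (j : ι) : dyadicCorrection H L X j j ≤ H * X j j := by
  simp only [dyadicCorrection, Matrix.sum_apply]
  refine (Finset.sum_le_sum fun h _ => sum_compress_dyadicBlock_apply_le hL h hX j).trans ?_
  simp

lemma compress_multiplicity_congr {L : List ι} {X X' : Matrix ι ι ℝ}
    (hrows : ∀ i ∈ L, X' i = X i) :
    compress (multiplicity L) X' = compress (multiplicity L) X := by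
  ext i j
  simp only [compress_apply]
  by_cases hi : i ∈ L
  · rw [hrows i hi]
  · simp [multiplicity_apply_of_notMem hi]

lemma posSemidef_dyadicCorrection_append_sub (H : ℕ) (L L' : List ι) {X X' : Matrix ι ι ℝ}
    (hX' : X'.PosSemidef) (hrows : ∀ i ∈ L, X' i = X i) :
    (dyadicCorrection H (L ++ L') X' - dyadicCorrection H L X).PosSemidef := by
  rw [dyadicCorrection, dyadicCorrection, ← Finset.sum_sub_distrib]
  refine posSemidef_sum _ fun h _ => ?_
  have hle : L.length / 2 ^ h ≤ (L ++ L').length / 2 ^ h := Nat.div_le_div_right (by simp)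
  have hold : ∑ c ∈ Finset.range (L.length / 2 ^ h),
        compress (multiplicity (dyadicBlock (L ++ L') h c)) X' =
      ∑ c ∈ Finset.range (L.length / 2 ^ h), compress (multiplicity (dyadicBlock L h c)) X :=
    Finset.sum_congr rfl fun c hc => by
      rw [dyadicBlock_append L L' (Finset.mem_range.1 hc)]
      exact compress_multiplicity_congr fun i hi => hrows i ((dyadicBlock_sublist L h c).subset hi)
  rw [← Finset.sum_range_add_sum_Ico _ hle, hold, add_sub_cancel_left]
  exact posSemidef_sum _ fun c _ => posSemidef_compress hX' _

end DyadicCorrection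

section Cover

/-- `P` covers the queries of `l` on the coordinates in `B`: each of them satisfies `qᵀq ≼ P` there.
If `L R` is a factorization of the query matrix with rows of `L` of norm at most `1`, then `Rᵀ R` is
such a cover. -/
def IsCover (P : Matrix ι ι ℝ) (B : Finset ι) (l : List (ι → ℝ)) : Prop :=
  P.PosSemidef ∧ ∀ q ∈ l, ∀ y, (∀ j ∉ B, y j = 0) → (q ⬝ᵥ y) ^ 2 ≤ quadForm P y

/-- The queries of `l` have a cover on all coordinates with diagonal at most `1`; this says that
their `γ₂` norm is at most `1`. -/
def HasUnitCover (l : List (ι → ℝ)) : Prop :=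
  ∃ P : Matrix ι ι ℝ, IsCover P Finset.univ l ∧ ∀ j, P j j ≤ 1

lemma IsCover.mono {P : Matrix ι ι ℝ} {B B' : Finset ι} {l l' : List (ι → ℝ)}
    (h : IsCover P B' l') (hB : B ⊆ B') (hl : l ⊆ l') : IsCover P B l :=
  ⟨h.1, fun q hq y hy => h.2 q (hl hq) y fun j hj => hy j fun hj' => hj (hB hj')⟩

lemma HasUnitCover.exists_isCover_trace_le {l : List (ι → ℝ)} (h : HasUnitCover l)
    (B : Finset ι) : ∃ P, IsCover P B l ∧ P.trace ≤ B.card := by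
  classical
  obtain ⟨P, hP, hdiag⟩ := h
  refine ⟨compress (mask B) P, ⟨posSemidef_compress hP.1 _, fun q hq y hy => ?_⟩, ?_⟩
  · rw [quadForm_compress, mask_mul_eq_self hy]
    exact hP.2 q hq y fun j hj => absurd (Finset.mem_univ j) hj
  · have hterm (j : ι) : compress (mask B) P j j ≤ if j ∈ B then 1 else 0 := by
      rw [compress_apply, mask]
      split_ifs
      exacts [by simpa using hdiag j, by simp]
    simpa [trace] using Finset.sum_le_sum fun j (_ : j ∈ Finset.univ) => hterm j

lemma HasUnitCover.apply_sq_le_one {l : List (ι → ℝ)} (h : HasUnitCover l) {q : ι → ℝ}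
    (hq : q ∈ l) (j : ι) : q j ^ 2 ≤ 1 := by
  classical
  obtain ⟨P, hP, hdiag⟩ := h
  have hj := hP.2 q hq (Pi.single j 1) fun i hi => absurd (Finset.mem_univ i) hi
  rw [dotProduct_single_one, quadForm_single] at hj
  exact hj.trans (hdiag j)

end Cover

section Greedy

variable [DecidableEq ι]

/-- The state of the greedy algorithm at a fixed scale: the Gram matrix of the directions chosen so
far and the columns that are full, in the order in which they became so. -/
structure GreedyState (ι : Type*) where
  gram : Matrix ι ι ℝ
  frozen : List ι

namespace GreedyState

/-- The columns that are not frozen. -/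
def active (σ : GreedyState ι) : Finset ι := σ.frozen.toFinsetᶜ

/-- The regularized inverse of the Gram matrix on the active columns. -/
noncomputable abbrev resolvent (σ : GreedyState ι) (s : ℝ) : Matrix ι ι ℝ :=
  ridgeInv σ.active σ.gram s

/-- The monotone Gram matrix published by the algorithm. The dyadic correction pays for the mass
on the frozen columns, which the resolvents ignore. -/
noncomputable def output (b : ℝ) (H : ℕ) (σ : GreedyState ι) : Matrix ι ι ℝ :=
  b • 1 + σ.gram + dyadicCorrection H σ.frozen σ.gram

/-- The energy of a cover `P` in the resolvents at the scales `b, 2 * b, …, 2 ^ (m - 1) * b`. It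
decreases whenever the algorithm adds a direction. -/
noncomputable def potential (b : ℝ) (m : ℕ) (P : Matrix ι ι ℝ) (σ : GreedyState ι) : ℝ :=
  ∑ i ∈ Finset.range m, b * 2 ^ i * (P * σ.resolvent (b * 2 ^ i)).trace

/-- At every scale the resolvent response to `q` is at most `θ`, so that `q` needs no further
direction. -/
def IsSettled (b : ℝ) (m : ℕ) (θ : ℝ) (q : ι → ℝ) (σ : GreedyState ι) : Prop :=
  ∀ i < m, b * 2 ^ i *
    ((σ.resolvent (b * 2 ^ i) *ᵥ q) ⬝ᵥ (σ.resolvent (b * 2 ^ i) *ᵥ q)) ≤ θ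

/-- Adds the unit direction `u` with weight `b` and freezes the columns that become full. -/
noncomputable def absorb (b : ℝ) (u : ι → ℝ) (σ : GreedyState ι) : GreedyState ι where
  gram := σ.gram + b • vecMulVec u u
  frozen := σ.frozen ++
    (Finset.univ.filter fun j => j ∉ σ.frozen ∧ b ≤ (σ.gram + b • vecMulVec u u) j j).toList

/-- The structural invariants of the algorithm run on the columns in `B` with column budget `b`. -/
structure IsValid (b : ℝ) (B : Finset ι) (σ : GreedyState ι) : Prop where
  posSemidef : σ.gram.PosSemidef
  nodup : σ.frozen.Nodup
  diag_le : ∀ j, σ.gram j j ≤ 2 * b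
  diag_lt : ∀ j ∉ σ.frozen, σ.gram j j < b
  le_diag : ∀ j ∈ σ.frozen, b ≤ σ.gram j j
  row_eq_zero : ∀ i ∉ B, ∀ j, σ.gram i j = 0

/-- The amortized invariant: the mass spent so far is paid for by the decrease of the potential of
every cover. -/
def IsBudgeted (b : ℝ) (m : ℕ) (θ : ℝ) (B : Finset ι) (l : List (ι → ℝ)) (σ : GreedyState ι) :
    Prop :=
  ∀ P, IsCover P B l → σ.potential b m P + θ / 2 * σ.gram.trace ≤ m * P.trace

/-- `σ'` is a possible later state of the algorithm than `σ`. -/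
def Extends (b : ℝ) (H : ℕ) (σ σ' : GreedyState ι) : Prop :=
  (σ'.output b H - σ.output b H).PosSemidef ∧ σ.frozen <+: σ'.frozen

variable {b θ : ℝ} {m H : ℕ} {B : Finset ι} {l : List (ι → ℝ)} {σ σ' σ'' : GreedyState ι}

lemma notMem_active {j : ι} : j ∉ σ.active ↔ j ∈ σ.frozen := by simp [active]

lemma Extends.refl : σ.Extends b H σ :=
  ⟨by rw [sub_self]; exact PosSemidef.zero, List.prefix_refl _⟩

lemma Extends.trans (h : σ.Extends b H σ') (h' : σ'.Extends b H σ'') : σ.Extends b H σ'' :=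
  ⟨by simpa using h'.1.add h.1, h.2.trans h'.2⟩

omit [Fintype ι] [DecidableEq ι] in
lemma IsValid.mono {B' : Finset ι} (hσ : σ.IsValid b B) (hB : B ⊆ B') : σ.IsValid b B' where
  posSemidef := hσ.posSemidef
  nodup := hσ.nodup
  diag_le := hσ.diag_le
  diag_lt := hσ.diag_lt
  le_diag := hσ.le_diag
  row_eq_zero := fun i hi => hσ.row_eq_zero i fun hi' => hi (hB hi')

lemma IsBudgeted.mono {B' : Finset ι} {l' : List (ι → ℝ)} (hσ : σ.IsBudgeted b m θ B l)
    (hB : B ⊆ B') (hl : l ⊆ l') : σ.IsBudgeted b m θ B' l' :=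
  fun P hP => hσ P (hP.mono hB hl)

omit [Fintype ι] [DecidableEq ι] in
lemma isValid_empty (hb : 0 < b) : IsValid b B ⟨0, []⟩ where
  posSemidef := PosSemidef.zero
  nodup := List.nodup_nil
  diag_le := fun j => by simpa using hb.le
  diag_lt := fun j _ => by simpa using hb
  le_diag := fun j hj => absurd hj List.not_mem_nil
  row_eq_zero := fun i _ j => rfl

lemma isBudgeted_empty (hb : 0 < b) : IsBudgeted b m θ B l ⟨0, []⟩ := by
  intro P hP
  have hscale (i : ℕ) : b * 2 ^ i * (P * (⟨0, []⟩ : GreedyState ι).resolvent (b * 2 ^ i)).trace ≤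
      P.trace := by
    have hs : 0 < b * 2 ^ i := by positivity
    have h := trace_mul_le_trace_mul (A := (⟨0, []⟩ : GreedyState ι).resolvent (b * 2 ^ i))
      (B := (b * 2 ^ i)⁻¹ • 1) hP.1 fun y => by
        rw [quadForm_smul, quadForm_one, inv_mul_eq_div]
        exact quadForm_ridgeInv_le_div PosSemidef.zero hs y
    rw [Matrix.mul_smul, Matrix.mul_one, trace_smul, smul_eq_mul, inv_mul_eq_div,
      le_div_iff₀' hs] at h
    exact h
  simpa [potential] using Finset.sum_le_sum fun i (_ : i ∈ Finset.range m) => hscale i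

lemma posSemidef_resolvent (hσ : σ.IsValid b B) {s : ℝ} (hs : 0 < s) :
    (σ.resolvent s).PosSemidef :=
  posSemidef_principalInv (posDef_add_smul_one hσ.posSemidef hs)

lemma resolvent_mulVec_apply_eq_zero (hσ : σ.IsValid b B) {s : ℝ} (hs : 0 < s) {q : ι → ℝ}
    (hq : ∀ j ∉ B, q j = 0) {j : ι} (hj : j ∉ B) : (σ.resolvent s *ᵥ q) j = 0 :=
  ridgeInv_mulVec_apply_eq_zero hσ.posSemidef hs (hσ.row_eq_zero j hj) (hq j hj)

lemma potential_nonneg (hb : 0 < b) (hσ : σ.IsValid b B) {P : Matrix ι ι ℝ}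
    (hP : P.PosSemidef) : 0 ≤ σ.potential b m P := by
  refine Finset.sum_nonneg fun i _ => mul_nonneg (by positivity) ?_
  simpa using trace_mul_le_trace_mul (A := 0) hP fun y => by
    simpa [quadForm] using quadForm_nonneg (posSemidef_resolvent hσ (by positivity)) y

lemma IsBudgeted.trace_le (hσB : σ.IsBudgeted b m θ B l) (hb : 0 < b) (hσ : σ.IsValid b B)
    {P : Matrix ι ι ℝ} (hP : IsCover P B l) : θ / 2 * σ.gram.trace ≤ m * P.trace := by
  linarith [hσB P hP, potential_nonneg (m := m) hb hσ hP.1]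

section Absorb

variable {u : ι → ℝ}

lemma absorb_gram_apply (i j : ι) :
    (σ.absorb b u).gram i j = σ.gram i j + b * (u i * u j) := by
  simp [absorb, vecMulVec_apply]

lemma posSemidef_absorb_gram (hb : 0 ≤ b) (hσ : σ.IsValid b B) :
    (σ.absorb b u).gram.PosSemidef :=
  hσ.posSemidef.add ((posSemidef_vecMulVec_self u).smul hb)

lemma trace_absorb_gram (hu : u ⬝ᵥ u = 1) :
    (σ.absorb b u).gram.trace = σ.gram.trace + b := by
  rw [absorb, trace_add, trace_smul, trace_vecMulVec, hu, smul_eq_mul, mul_one]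

lemma mem_absorb_frozen {j : ι} :
    j ∈ (σ.absorb b u).frozen ↔ j ∈ σ.frozen ∨ j ∉ σ.frozen ∧ b ≤ (σ.absorb b u).gram j j := by
  simp only [absorb, List.mem_append, Finset.mem_toList, Finset.mem_filter, Finset.mem_univ,
    true_and]

omit [DecidableEq ι] in
lemma apply_mul_self_le_one (hu : u ⬝ᵥ u = 1) (j : ι) : u j * u j ≤ 1 :=
  hu ▸ Finset.single_le_sum (f := fun j => u j * u j) (fun _ _ => mul_self_nonneg _)
    (Finset.mem_univ j)

lemma isValid_absorb (hb : 0 ≤ b) (hσ : σ.IsValid b B) (hu : u ⬝ᵥ u = 1)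
    (hactive : ∀ j ∉ σ.active, u j = 0) (hB : ∀ j ∉ B, u j = 0) :
    (σ.absorb b u).IsValid b B := by
  have hfrozen (j : ι) (hj : j ∈ σ.frozen) : (σ.absorb b u).gram j j = σ.gram j j := by
    rw [absorb_gram_apply, hactive j (notMem_active.2 hj)]
    ring
  refine ⟨posSemidef_absorb_gram hb hσ, ?_, fun j => ?_, fun j hj => ?_, fun j hj => ?_,
    fun i hi j => ?_⟩
  · exact hσ.nodup.append (Finset.nodup_toList _) fun j hj hj' =>
      (Finset.mem_filter.1 (Finset.mem_toList.1 hj')).2.1 hj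
  · by_cases hj : j ∈ σ.frozen
    · exact (hfrozen j hj).trans_le (hσ.diag_le j)
    · rw [absorb_gram_apply]
      linarith [hσ.diag_lt j hj, mul_le_of_le_one_right hb (apply_mul_self_le_one hu j)]
  · by_contra! hle
    exact hj (mem_absorb_frozen.2 (or_iff_not_imp_left.2 fun hj' => ⟨hj', hle⟩))
  · rcases mem_absorb_frozen.1 hj with hj' | hj'
    · exact (hσ.le_diag j hj').trans_eq (hfrozen j hj').symm
    · exact hj'.2
  · rw [absorb_gram_apply, hσ.row_eq_zero i hi, hB i hi]
    ring

lemma extends_absorb (hb : 0 ≤ b) (hσ : σ.IsValid b B) (hactive : ∀ j ∉ σ.active, u j = 0) :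
    σ.Extends b H (σ.absorb b u) := by
  refine ⟨?_, List.prefix_append _ _⟩
  have hcorr : (dyadicCorrection H (σ.absorb b u).frozen (σ.absorb b u).gram -
      dyadicCorrection H σ.frozen σ.gram).PosSemidef := by
    refine posSemidef_dyadicCorrection_append_sub H _ _ (posSemidef_absorb_gram hb hσ) ?_
    intro i hi
    ext j
    rw [absorb_gram_apply, hactive i (notMem_active.2 hi)]
    ring
  have hsplit : (σ.absorb b u).output b H - σ.output b H = b • vecMulVec u u +
      (dyadicCorrection H (σ.absorb b u).frozen (σ.absorb b u).gram -
        dyadicCorrection H σ.frozen σ.gram) := by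
    simp only [output, absorb]
    abel
  rw [hsplit]
  exact ((posSemidef_vecMulVec_self u).smul hb).add hcorr

lemma quadForm_resolvent_absorb_le (hb : 0 < b) (hσ : σ.IsValid b B) (hu : u ⬝ᵥ u = 1) {s : ℝ}
    (hbs : b ≤ s) (p : ι → ℝ) :
    quadForm ((σ.absorb b u).resolvent s) p ≤
      quadForm (σ.resolvent s) p - b / 2 * (p ⬝ᵥ σ.resolvent s *ᵥ u) ^ 2 := by
  have hs : 0 < s := hb.trans_le hbs
  have hsub : (σ.absorb b u).active ⊆ σ.active := fun j hj => by
    simp only [active, Finset.mem_compl, List.mem_toFinset] at hj ⊢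
    exact fun hj' => hj (mem_absorb_frozen.2 (.inl hj'))
  have hbu : b * quadForm (σ.resolvent s) u ≤ 1 := by
    have h := quadForm_ridgeInv_le_div (J := σ.active) hσ.posSemidef hs u
    rw [hu] at h
    calc b * quadForm (σ.resolvent s) u ≤ b * (1 / s) := mul_le_mul_of_nonneg_left h hb.le
      _ = b / s := mul_one_div b s
      _ ≤ 1 := (div_le_one hs).2 hbs
  calc quadForm ((σ.absorb b u).resolvent s) p
      ≤ quadForm (ridgeInv σ.active (σ.absorb b u).gram s) p :=
        quadForm_principalInv_mono
          (posDef_add_smul_one (posSemidef_absorb_gram hb.le hσ) hs) hsub p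
    _ = quadForm (principalInv σ.active (σ.gram + s • 1 + b • vecMulVec u u)) p := by
        rw [add_right_comm]
        rfl
    _ ≤ _ := quadForm_principalInv_add_vecMulVec_le
        (posDef_add_smul_one hσ.posSemidef hs) hb.le hbu p

lemma potential_absorb_le (hb : 0 < b) (hσ : σ.IsValid b B) (hu : u ⬝ᵥ u = 1)
    {P : Matrix ι ι ℝ} (hP : P.PosSemidef) {i : ℕ} (hi : i < m) :
    (σ.absorb b u).potential b m P ≤ σ.potential b m P -
      b * 2 ^ i * (b / 2 * quadForm P (σ.resolvent (b * 2 ^ i) *ᵥ u)) := by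
  have hterm (k : ℕ) : b * 2 ^ k * (P * (σ.absorb b u).resolvent (b * 2 ^ k)).trace ≤
      b * 2 ^ k * (P * σ.resolvent (b * 2 ^ k)).trace -
        b * 2 ^ k * (b / 2 * quadForm P (σ.resolvent (b * 2 ^ k) *ᵥ u)) := by
    have hbs : b ≤ b * 2 ^ k := le_mul_of_one_le_right hb.le (one_le_pow₀ one_le_two)
    set w := σ.resolvent (b * 2 ^ k) *ᵥ u
    have h := trace_mul_le_trace_mul (A := (σ.absorb b u).resolvent (b * 2 ^ k))
      (B := σ.resolvent (b * 2 ^ k) - (b / 2) • vecMulVec w w) hP fun y => by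
        rw [quadForm_sub, quadForm_smul, quadForm_vecMulVec_self, dotProduct_comm w]
        exact quadForm_resolvent_absorb_le hb hσ hu hbs y
    rw [Matrix.mul_sub, Matrix.mul_smul, trace_sub, trace_smul, trace_mul_vecMulVec_self,
      smul_eq_mul] at h
    rw [← mul_sub]
    exact mul_le_mul_of_nonneg_left h (by positivity)
  have hdrop := Finset.single_le_sum
    (f := fun k => b * 2 ^ k * (b / 2 * quadForm P (σ.resolvent (b * 2 ^ k) *ᵥ u)))
    (fun k _ => by have := quadForm_nonneg hP (σ.resolvent (b * 2 ^ k) *ᵥ u); positivity)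
    (Finset.mem_range.2 hi)
  have hsum := Finset.sum_le_sum fun k (_ : k ∈ Finset.range m) => hterm k
  rw [Finset.sum_sub_distrib] at hsum
  exact hsum.trans (sub_le_sub_left hdrop _)

end Absorb

lemma exists_extends_of_not_isSettled (hb : 0 < b) (hθ : 0 ≤ θ) (hσ : σ.IsValid b B)
    (hσB : σ.IsBudgeted b m θ B l) {q : ι → ℝ} (hq : q ∈ l)
    (hn : ¬ σ.IsSettled b m θ (mask B * q)) :
    ∃ σ', σ'.IsValid b B ∧ σ'.IsBudgeted b m θ B l ∧ σ.Extends b H σ' ∧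
      σ'.gram.trace = σ.gram.trace + b := by
  simp only [IsSettled, not_forall, not_le] at hn
  obtain ⟨i, hi, hz⟩ := hn
  have hs : 0 < b * 2 ^ i := by positivity
  set s := b * 2 ^ i
  set z := σ.resolvent s *ᵥ (mask B * q) with hzdef
  have hzz : 0 < z ⬝ᵥ z := by by_contra! h; nlinarith
  set r := Real.sqrt (z ⬝ᵥ z)
  have hr : 0 < r := Real.sqrt_pos.2 hzz
  have hr2 : r ^ 2 = z ⬝ᵥ z := Real.sq_sqrt hzz.le
  set u := r⁻¹ • z with hudef
  have huu : u ⬝ᵥ u = 1 := by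
    rw [hudef, smul_dotProduct, dotProduct_smul, smul_eq_mul, smul_eq_mul, ← hr2]
    field_simp
  have hactive : ∀ j ∉ σ.active, u j = 0 := fun j hj => by
    simp [hudef, hzdef, principalInv_mulVec_apply_of_notMem hj]
  have huB : ∀ j ∉ B, u j = 0 := fun j hj => by
    rw [hudef, Pi.smul_apply, hzdef, resolvent_mulVec_apply_eq_zero hσ hs
      (fun j hj => mask_mul_apply_of_notMem hj q) hj, smul_zero]
  set w := σ.resolvent s *ᵥ u with hw
  have hwB : ∀ j ∉ B, w j = 0 := fun j hj => resolvent_mulVec_apply_eq_zero hσ hs huB hj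
  have hqw : (q ⬝ᵥ w) ^ 2 = z ⬝ᵥ z := by
    rw [← mask_mul_dotProduct hwB, hw,
      dotProduct_mulVec_comm (posSemidef_resolvent hσ hs).isHermitian, ← hzdef, hudef,
      smul_dotProduct, smul_eq_mul, mul_pow, ← hr2]
    field_simp
  refine ⟨σ.absorb b u, isValid_absorb hb.le hσ huu hactive huB, fun P hP => ?_,
    extends_absorb hb.le hσ hactive, trace_absorb_gram huu⟩
  have hgain : θ * (b / 2) ≤ s * (b / 2 * quadForm P w) :=
    calc θ * (b / 2) ≤ s * (z ⬝ᵥ z) * (b / 2) := by gcongr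
      _ = s * (b / 2 * (q ⬝ᵥ w) ^ 2) := by rw [hqw]; ring
      _ ≤ s * (b / 2 * quadForm P w) := by gcongr; exact hP.2 q hq w hwB
  rw [trace_absorb_gram huu]
  linarith [hσB P hP, potential_absorb_le hb hσ huu hP.1 hi]

lemma exists_isSettled (hb : 0 < b) (hθ : 0 < θ) (hσ : σ.IsValid b B)
    (hσB : σ.IsBudgeted b m θ B l) {q : ι → ℝ} (hq : q ∈ l) {P : Matrix ι ι ℝ}
    (hP : IsCover P B l) :
    ∃ σ', σ'.IsValid b B ∧ σ'.IsBudgeted b m θ B l ∧ σ.Extends b H σ' ∧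
      σ'.IsSettled b m θ (mask B * q) := by
  obtain ⟨r, hr⟩ := exists_nat_gt ((2 * m * P.trace / θ - σ.gram.trace) / b)
  rw [div_lt_iff₀ hb] at hr
  induction r generalizing σ with
  | zero =>
    have hmax := hσB.trace_le hb hσ hP
    rw [Nat.cast_zero, zero_mul, sub_neg, div_lt_iff₀ hθ] at hr
    linarith
  | succ r ih =>
    by_cases hsettled : σ.IsSettled b m θ (mask B * q)
    · exact ⟨σ, hσ, hσB, .refl, hsettled⟩
    · obtain ⟨σ₁, hσ₁, hσB₁, hext, htrace⟩ :=
        exists_extends_of_not_isSettled (H := H) hb hθ.le hσ hσB hq hsettled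
      obtain ⟨σ₂, hσ₂, hσB₂, hext', hsettled'⟩ :=
        ih hσ₁ hσB₁ (by rw [htrace]; push_cast at hr; linarith)
      exact ⟨σ₂, hσ₂, hσB₂, hext.trans hext', hsettled'⟩

lemma card_mul_le_trace (hσ : σ.IsValid b B) :
    (σ.frozen.toFinset.card : ℝ) * b ≤ σ.gram.trace := by
  rw [← nsmul_eq_mul]
  refine (Finset.card_nsmul_le_sum _ (fun j => σ.gram j j) b fun j hj =>
    hσ.le_diag j (List.mem_toFinset.1 hj)).trans ?_
  exact Finset.sum_le_sum_of_subset_of_nonneg (Finset.subset_univ _)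
    fun j _ _ => hσ.posSemidef.diag_nonneg

lemma two_mul_card_frozen_le (hb : 0 < b) (hm : 0 < m) (hσ : σ.IsValid b B)
    (hσB : σ.IsBudgeted b m (4 * m / b) B l) (hl : HasUnitCover l) :
    2 * σ.frozen.toFinset.card ≤ B.card := by
  obtain ⟨P, hP, htrace⟩ := hl.exists_isCover_trace_le B
  have hm' : (0 : ℝ) < m := by exact_mod_cast hm
  have hle : m * (2 * (σ.frozen.toFinset.card : ℝ)) ≤ m * B.card :=
    calc m * (2 * (σ.frozen.toFinset.card : ℝ))
        = 4 * m / b / 2 * (σ.frozen.toFinset.card * b) := by field_simp; ring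
      _ ≤ 4 * m / b / 2 * σ.gram.trace := by gcongr; exact card_mul_le_trace hσ
      _ ≤ m * P.trace := hσB.trace_le hb hσ hP
      _ ≤ m * B.card := by gcongr
  exact_mod_cast le_of_mul_le_mul_left hle hm'

omit [Fintype ι] in
lemma frozen_toFinset_subset (hb : 0 < b) (hσ : σ.IsValid b B) : σ.frozen.toFinset ⊆ B := by
  intro j hj
  by_contra hjB
  exact hb.not_ge (hσ.row_eq_zero j hjB j ▸ hσ.le_diag j (List.mem_toFinset.1 hj))

lemma posSemidef_output (hb : 0 ≤ b) (hσ : σ.IsValid b B) : (σ.output b H).PosSemidef :=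
  ((PosSemidef.one.smul hb).add hσ.posSemidef).add (posSemidef_dyadicCorrection _ _ hσ.posSemidef)

lemma output_apply_le (hσ : σ.IsValid b B) (j : ι) : σ.output b H j j ≤ b * (2 * H + 3) := by
  have hcorr := dyadicCorrection_apply_le H hσ.nodup hσ.posSemidef j
  have hle := mul_le_mul_of_nonneg_left (hσ.diag_le j) H.cast_nonneg
  simp only [output, Matrix.add_apply, Matrix.smul_apply, one_apply_eq, smul_eq_mul]
  linarith [hσ.diag_le j]

lemma dotProduct_sq_le_output (hb : 0 < b) (hθ : 0 ≤ θ) (hH : Fintype.card ι < 2 ^ H)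
    (hm : (Fintype.card ι : ℝ) ≤ b * 2 ^ m) (hσ : σ.IsValid b B) {q : ι → ℝ}
    (hq : ∀ j, q j ^ 2 ≤ 1) (hsettled : σ.IsSettled b m θ q) (y : ι → ℝ) :
    ((mask σ.active * q) ⬝ᵥ y) ^ 2 ≤ (m * θ + 1) * (H + 1) * quadForm (σ.output b H) y := by
  have hlen : σ.frozen.length < 2 ^ H := hσ.nodup.length_le_card.trans_lt hH
  have hS := posDef_add_smul_one hσ.posSemidef hb
  set v := mask σ.active * y with hv
  have hsupp : ∀ j ∉ σ.active, v j = 0 := fun j hj => mask_mul_apply_of_notMem hj y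
  have hqv : (mask σ.active * q) ⬝ᵥ y = q ⬝ᵥ v :=
    Finset.sum_congr rfl fun j _ => by simp only [hv, Pi.mul_apply]; ring
  have hlast : quadForm (ridgeInv σ.active σ.gram (b * 2 ^ m)) q ≤ 1 := by
    refine (quadForm_ridgeInv_le_div hσ.posSemidef (by positivity) q).trans ?_
    refine (div_le_one (by positivity)).2 (le_trans ?_ hm)
    simpa [dotProduct, sq] using Finset.sum_le_sum fun j (_ : j ∈ Finset.univ) => hq j
  have henergy : quadForm (σ.resolvent b) q ≤ m * θ + 1 := by
    linarith [quadForm_ridgeInv_le_telescope hσ.posSemidef hb q m hsettled]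
  have hform : quadForm (σ.gram + b • 1) v ≤ (H + 1) * quadForm (σ.output b H) y := by
    have hmask := quadForm_mask_compl_le hσ.nodup hlen hσ.posSemidef y
    have hnorm : b * (v ⬝ᵥ v) ≤ (H + 1) * (b * (y ⬝ᵥ y)) := by
      have hy : 0 ≤ b * (y ⬝ᵥ y) := mul_nonneg hb.le (dotProduct_star_self_nonneg y)
      have hvy := mul_le_mul_of_nonneg_left (mask_mul_dotProduct_self_le σ.active y) hb.le
      exact hvy.trans (le_mul_of_one_le_left hy (by linarith [H.cast_nonneg (α := ℝ)]))
    rw [quadForm_add_smul_one, output, quadForm_add, quadForm_add, quadForm_smul, quadForm_one]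
    linarith [show quadForm σ.gram v ≤ _ from hmask]
  calc ((mask σ.active * q) ⬝ᵥ y) ^ 2
      ≤ quadForm (σ.resolvent b) q * quadForm (σ.gram + b • 1) v := by
        rw [hqv]; exact dotProduct_sq_le hS q hsupp
    _ ≤ (m * θ + 1) * ((H + 1) * quadForm (σ.output b H) y) :=
        mul_le_mul henergy hform (quadForm_nonneg hS.posSemidef v) (by positivity)
    _ = _ := by ring

end GreedyState

end Greedy

section OnlineGram

lemma exists_forall_of_step {α S : Type*} {Inv : List α → S → Prop} {R : List α → α → S → S → Prop}
    (h0 : ∃ s, Inv [] s) (hstep : ∀ l a s, Inv l s → ∃ s', Inv (l ++ [a]) s' ∧ R l a s s') :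
    ∃ F : List α → S, (∀ l, Inv l (F l)) ∧ ∀ l a, R l a (F l) (F (l ++ [a])) := by
  obtain ⟨s₀, hs₀⟩ := h0
  choose next hnext hR using fun (l : List α) (a : α) (s : {s // Inv l s}) => hstep l a s s.2
  let F (l : List α) : {s // Inv l s} :=
    List.reverseRecOn l ⟨s₀, hs₀⟩ fun l a s => ⟨next l a s, hnext l a s⟩
  refine ⟨fun l => F l, fun l => (F l).2, fun l a => ?_⟩
  have hF : (F (l ++ [a]) : S) = next l a (F l) := by
    simp only [F, List.reverseRecOn_concat]
  simpa only [hF] using hR l a (F l)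

/-- A map from histories to Gram matrices that can only increase as the history grows; this is what
an online algorithm that appends rows to `R` needs to maintain as `Rᵀ R`. -/
structure IsOnlineGram {α : Type*} (M : List α → Matrix ι ι ℝ) : Prop where
  posSemidef : ∀ l, (M l).PosSemidef
  mono : ∀ l a, (M (l ++ [a]) - M l).PosSemidef

omit [Fintype ι] in
lemma IsOnlineGram.const {α : Type*} {P : Matrix ι ι ℝ} (hP : P.PosSemidef) :
    IsOnlineGram fun _ : List α => P :=
  ⟨fun _ => hP, fun _ _ => by rw [sub_self]; exact PosSemidef.zero⟩

omit [Fintype ι] in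
lemma IsOnlineGram.add {α : Type*} {M M' : List α → Matrix ι ι ℝ} (hM : IsOnlineGram M)
    (hM' : IsOnlineGram M') : IsOnlineGram fun l => M l + M' l :=
  ⟨fun l => (hM.posSemidef l).add (hM'.posSemidef l), fun l a => by
    rw [add_sub_add_comm]; exact (hM.mono l a).add (hM'.mono l a)⟩

variable [DecidableEq ι]

open GreedyState in
lemma exists_onlineGram_halving {b : ℝ} (hb : 0 < b) {H m : ℕ} (hm0 : 0 < m)
    (hH : Fintype.card ι < 2 ^ H) (hm : (Fintype.card ι : ℝ) ≤ b * 2 ^ m)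
    {B : List (ι → ℝ) → Finset ι} (hB : ∀ l q, B l ⊆ B (l ++ [q])) :
    ∃ (G : List (ι → ℝ) → Matrix ι ι ℝ) (B' : List (ι → ℝ) → Finset ι), IsOnlineGram G ∧
      (∀ l j, G l j j ≤ b * (2 * H + 3)) ∧ (∀ l, B' l ⊆ B l) ∧ (∀ l q, B' l ⊆ B' (l ++ [q])) ∧
      (∀ l, HasUnitCover l → 2 * (B' l).card ≤ (B l).card) ∧
      ∀ l q, HasUnitCover (l ++ [q]) → ∀ y,
        ((mask (B (l ++ [q]) \ B' (l ++ [q])) * q) ⬝ᵥ y) ^ 2 ≤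
          (m * (4 * m / b) + 1) * (H + 1) * quadForm (G (l ++ [q])) y := by
  set θ : ℝ := 4 * m / b
  have hθpos : 0 < θ := by positivity
  obtain ⟨F, hF, hstep⟩ := exists_forall_of_step
    (Inv := fun l σ => IsValid b (B l) σ ∧ IsBudgeted b m θ (B l) l σ)
    (R := fun l q σ σ' => σ.Extends b H σ' ∧
      (HasUnitCover (l ++ [q]) → σ'.IsSettled b m θ (mask (B (l ++ [q])) * q)))
    ⟨⟨0, []⟩, isValid_empty hb, isBudgeted_empty hb⟩ fun l q σ ⟨hσ, hσB⟩ => by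
      have hσ' := hσ.mono (hB l q)
      have hσB' := hσB.mono (hB l q) (List.subset_append_left l [q])
      by_cases hcover : HasUnitCover (l ++ [q])
      · obtain ⟨P, hP, -⟩ := hcover.exists_isCover_trace_le (B (l ++ [q]))
        obtain ⟨σ', hvalid, hbudget, hext, hsettled⟩ :=
          exists_isSettled (H := H) hb hθpos hσ' hσB'
            (List.mem_append_right l (List.mem_singleton_self q)) hP
        exact ⟨σ', ⟨hvalid, hbudget⟩, hext, fun _ => hsettled⟩
      · exact ⟨σ, ⟨hσ', hσB'⟩, .refl, fun h => absurd h hcover⟩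
  refine ⟨fun l => (F l).output b H, fun l => (F l).frozen.toFinset,
    ⟨fun l => posSemidef_output hb.le (hF l).1, fun l q => (hstep l q).1.1⟩,
    fun l => output_apply_le (hF l).1, fun l => frozen_toFinset_subset hb (hF l).1,
    fun l q j hj => List.mem_toFinset.2 ((hstep l q).1.2.subset (List.mem_toFinset.1 hj)),
    fun l hcover => ?_, fun l q hcover y => ?_⟩
  · exact two_mul_card_frozen_le hb hm0 (hF l).1 (hF l).2 hcover
  · have hq (j : ι) : (mask (B (l ++ [q])) * q) j ^ 2 ≤ 1 := by
      rw [mask_mul_apply]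
      split_ifs
      exacts [hcover.apply_sq_le_one (List.mem_append_right l (by simp)) j, by simp]
    have h := dotProduct_sq_le_output hb hθpos.le hH hm (hF _).1 hq ((hstep l q).2 hcover) y
    rwa [active, ← mul_assoc, mask_mul_mask, Finset.inter_comm, ← Finset.sdiff_eq_inter_compl] at h

/-- A pair of an online Gram matrix and a growing set of postponed columns such that `G` handles,
with cost `C`, all queries restricted to the columns outside `B`. -/
structure IsPartialCover (C : ℝ) (G : List (ι → ℝ) → Matrix ι ι ℝ)
    (B : List (ι → ℝ) → Finset ι) : Prop where
  isOnlineGram : IsOnlineGram G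
  mono : ∀ l q, B l ⊆ B (l ++ [q])
  dotProduct_sq_le : ∀ l q, HasUnitCover (l ++ [q]) → ∀ y,
    ((mask (B (l ++ [q]))ᶜ * q) ⬝ᵥ y) ^ 2 ≤ C * quadForm (G (l ++ [q])) y

omit [Fintype ι] [DecidableEq ι] in
lemma add_sq_le_add_one_mul_add {r x y X Y : ℝ} (hr : 0 ≤ r) (hX : 0 ≤ X) (hx : x ^ 2 ≤ r * X)
    (hy : y ^ 2 ≤ Y) : (x + y) ^ 2 ≤ (r + 1) * (X + Y) := by
  have hY : 0 ≤ Y := (sq_nonneg y).trans hy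
  have hcross : 2 * (x * y) ≤ X + r * Y := by
    have hprod : x ^ 2 * y ^ 2 ≤ r * X * Y := by gcongr
    refine le_of_sq_le_sq ?_ (by positivity)
    nlinarith [sq_nonneg (X - r * Y)]
  linarith

lemma exists_isPartialCover {b : ℝ} (hb : 0 < b) {H m : ℕ} (hm0 : 0 < m)
    (hH : Fintype.card ι < 2 ^ H) (hm : (Fintype.card ι : ℝ) ≤ b * 2 ^ m) (r : ℕ) :
    ∃ G B, IsPartialCover (r * ((m * (4 * m / b) + 1) * (H + 1))) G B ∧
      (∀ l (j : ι), G l j j ≤ r * (b * (2 * H + 3))) ∧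
      ∀ l, HasUnitCover l → 2 ^ r * (B l).card ≤ Fintype.card ι := by
  induction r with
  | zero =>
    refine ⟨fun _ => 0, fun _ => Finset.univ, ⟨.const .zero, fun _ _ => le_rfl, fun l q _ y => ?_⟩,
      fun _ _ => by simp, fun _ _ => by simp⟩
    have hmask : mask (∅ : Finset ι) = 0 := funext fun j => by simp [mask]
    simp [hmask, quadForm]
  | succ r ih =>
    obtain ⟨G, B, hGB, hdiag, hcard⟩ := ih
    obtain ⟨G', B', hG', hdiag', hsub, hmono, hhalf, hcover⟩ :=
      exists_onlineGram_halving hb hm0 hH hm hGB.mono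
    refine ⟨fun l => G l + G' l, B', ⟨hGB.isOnlineGram.add hG', hmono, fun l q hl y => ?_⟩,
      fun l j => ?_, fun l hl => ?_⟩
    · have hsplit : mask (B' (l ++ [q]))ᶜ * q =
          mask (B (l ++ [q]))ᶜ * q + mask (B (l ++ [q]) \ B' (l ++ [q])) * q := by
        rw [← add_mul, ← compl_sdiff_compl, add_comm,
          mask_sdiff_add_mask (Finset.compl_subset_compl.2 (hsub _))]
      set C : ℝ := (m * (4 * m / b) + 1) * (H + 1)
      have hC : 0 ≤ C := by positivity
      have h := add_sq_le_add_one_mul_add r.cast_nonneg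
        (mul_nonneg hC (quadForm_nonneg (hGB.isOnlineGram.posSemidef _) y))
        ((hGB.dotProduct_sq_le l q hl y).trans_eq (mul_assoc _ _ _)) (hcover l q hl y)
      rw [← mul_add, ← quadForm_add, ← add_dotProduct, ← hsplit, ← mul_assoc] at h
      exact_mod_cast h
    · rw [Nat.cast_succ, add_one_mul]
      exact add_le_add (hdiag l j) (hdiag' l j)
    · rw [pow_succ, mul_assoc]
      exact (Nat.mul_le_mul_left _ (hhalf l hl)).trans (hcard l hl)

end OnlineGram

section FixedScale

omit [Fintype ι]

lemma le_div_mul_two_pow {n H : ℕ} (hH0 : 0 < H) (hn : n < 2 ^ H) :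
    (n : ℝ) ≤ 1 / (5 * H ^ 2) * 2 ^ (3 * H + 3) := by
  have hpow : (2 : ℝ) ^ (3 * H + 3) = 8 * (2 ^ H * (2 ^ H) ^ 2) := by ring
  have hn' : (n : ℝ) ≤ 2 ^ H := by exact_mod_cast hn.le
  have hH : (H : ℝ) ≤ 2 ^ H := by exact_mod_cast Nat.lt_two_pow_self.le
  have hprod : (n : ℝ) * H ^ 2 ≤ 2 ^ H * (2 ^ H) ^ 2 := by gcongr
  rw [hpow, one_div_mul_eq_div, le_div_iff₀ (by positivity)]
  linarith [show (0 : ℝ) ≤ 2 ^ H * (2 ^ H) ^ 2 by positivity]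

lemma cover_constant_le {H : ℕ} (hH0 : 0 < H) :
    (H : ℝ) * ((((3 * H + 3 : ℕ) : ℝ) * (4 * ((3 * H + 3 : ℕ) : ℝ) / (1 / (5 * H ^ 2))) + 1) *
      (H + 1)) ≤ 1442 * H ^ 6 := by
  have hH : (1 : ℝ) ≤ H := by exact_mod_cast hH0
  have hm : ((3 * H + 3 : ℕ) : ℝ) ≤ 6 * H := by push_cast; linarith
  calc _ = (H : ℝ) * ((20 * ((3 * H + 3 : ℕ) : ℝ) ^ 2 * H ^ 2 + 1) * (H + 1)) := by
        rw [div_div_eq_mul_div, div_one]; ring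
    _ ≤ H * ((20 * (6 * H) ^ 2 * H ^ 2 + H ^ 4) * (H + H)) := by
        gcongr
        exact one_le_pow₀ hH
    _ = 1442 * (H : ℝ) ^ 6 := by ring

lemma exists_onlineGram_of_hasUnitCover (ι : Type*) [Fintype ι] :
    ∃ A : List (ι → ℝ) → Matrix ι ι ℝ, IsOnlineGram A ∧ (∀ l j, A l j j ≤ 1) ∧
      ∀ l q, HasUnitCover (l ++ [q]) → ∀ y, (q ⬝ᵥ y) ^ 2 ≤
        1442 * ((Nat.log 2 (Fintype.card ι) + 1 : ℕ) : ℝ) ^ 6 * quadForm (A (l ++ [q])) y := by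
  classical
  set H := Nat.log 2 (Fintype.card ι) + 1
  have hH0 : 0 < H := Nat.succ_pos _
  have hH : Fintype.card ι < 2 ^ H := Nat.lt_pow_succ_log_self one_lt_two _
  obtain ⟨G, B, hGB, hdiag, hcard⟩ := exists_isPartialCover (b := 1 / (5 * H ^ 2)) (by positivity)
    (m := 3 * H + 3) (Nat.succ_pos _) hH (le_div_mul_two_pow hH0 hH) H
  have hempty (l : List (ι → ℝ)) (hl : HasUnitCover l) : B l = ∅ := by
    by_contra hne
    have hpos := Finset.card_pos.2 (Finset.nonempty_iff_ne_empty.2 hne)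
    exact ((Nat.le_mul_of_pos_right _ hpos).trans (hcard l hl)).not_gt hH
  refine ⟨G, hGB.isOnlineGram, fun l j => (hdiag l j).trans ?_, fun l q hl y => ?_⟩
  · have hH1 : (1 : ℝ) ≤ H := by exact_mod_cast hH0
    rw [one_div_mul_eq_div, mul_div_assoc', div_le_one (by positivity)]
    nlinarith
  · have h := hGB.dotProduct_sq_le l q hl y
    rw [hempty _ hl, mask_mul_eq_self (by simp)] at h
    exact h.trans (mul_le_mul_of_nonneg_right (cover_constant_le hH0)
      (quadForm_nonneg (hGB.isOnlineGram.posSemidef _) y))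

end FixedScale

section Superposition

lemma hasSum_quadForm {X : ℕ → Matrix ι ι ℝ} {Y : Matrix ι ι ℝ} (h : HasSum X Y) (y : ι → ℝ) :
    HasSum (fun k => quadForm (X k) y) (quadForm Y y) :=
  h.map (AddMonoidHom.mk' (quadForm · y) fun A B => quadForm_add A B y)
    (continuous_const.dotProduct (continuous_id.matrix_mulVec continuous_const))

omit [Fintype ι] in
lemma posSemidef_of_hasSum [Finite ι] {X : ℕ → Matrix ι ι ℝ} {Y : Matrix ι ι ℝ} (h : HasSum X Y)
    (hX : ∀ k, (X k).PosSemidef) : Y.PosSemidef := by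
  have := Fintype.ofFinite ι
  refine posSemidef_of_quadForm_nonneg ?_ fun y =>
    (hasSum_quadForm h y).nonneg fun k => quadForm_nonneg (hX k) y
  have hconj := h.matrix_conjTranspose
  simp only [fun k => (hX k).isHermitian.eq] at hconj
  exact hconj.unique h

omit [Fintype ι] in
lemma IsOnlineGram.hasSum [Finite ι] {α : Type*} {M : ℕ → List α → Matrix ι ι ℝ}
    {S : List α → Matrix ι ι ℝ} (h : ∀ l, HasSum (M · l) (S l))
    (hM : ∀ k, IsOnlineGram (M k)) : IsOnlineGram S :=
  ⟨fun l => posSemidef_of_hasSum (h l) fun k => (hM k).posSemidef l,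
    fun l a => posSemidef_of_hasSum ((h (l ++ [a])).sub (h l)) fun k => (hM k).mono l a⟩

omit [Fintype ι] in
lemma IsOnlineGram.smul {α : Type*} {M : List α → Matrix ι ι ℝ} (hM : IsOnlineGram M) {r : ℝ}
    (hr : 0 ≤ r) : IsOnlineGram fun l => r • M l :=
  ⟨fun l => (hM.posSemidef l).smul hr, fun l a => by rw [← smul_sub]; exact (hM.mono l a).smul hr⟩

omit [Fintype ι] in
lemma IsOnlineGram.comp_map_head {α β : Type*} {M : List β → Matrix ι ι ℝ} (hM : IsOnlineGram M)
    (f : Option α → α → β) : IsOnlineGram fun l => M (l.map (f l.head?)) := by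
  refine ⟨fun l => hM.posSemidef _, fun l a => ?_⟩
  cases l with
  | nil => exact hM.mono [] (f (some a) a)
  | cons x l =>
    simpa only [List.cons_append, List.head?_cons, List.map_append, List.map_cons, List.map_nil]
      using hM.mono ((x :: l).map (f (some x))) (f (some x) a)

omit [Fintype ι] in
lemma summable_smul_of_abs_apply_le_one {σ : ℕ → ℝ} (hσ : ∀ k, 0 ≤ σ k) (hs : Summable σ)
    {X : ℕ → Matrix ι ι ℝ} (hX : ∀ k i j, |X k i j| ≤ 1) : Summable fun k => σ k • X k := by
  refine Pi.summable.2 fun i => Pi.summable.2 fun j => hs.of_norm_bounded fun k => ?_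
  rw [Matrix.smul_apply, smul_eq_mul, Real.norm_eq_abs, abs_mul, abs_of_nonneg (hσ k)]
  exact mul_le_of_le_one_right (hσ k) (hX k i j)

lemma exists_onlineGram_superposition {α : Type*} {A : ℕ → List α → Matrix ι ι ℝ}
    (hA : ∀ k, IsOnlineGram (A k)) (hdiag : ∀ k l j, A k l j j ≤ 1) {σ : ℕ → ℝ}
    (hσ : ∀ k, 0 ≤ σ k) (hs : Summable σ) (hs2 : ∑' k, σ k ≤ 1 / 2) :
    ∃ M : List α → Matrix ι ι ℝ, IsOnlineGram M ∧ (∀ l, (M l).PosDef) ∧ (∀ l j, M l j j ≤ 1) ∧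
      ∀ k l y, σ k * quadForm (A k l) y ≤ quadForm (M l) y := by
  classical
  have hsum (l : List α) : HasSum (fun k => σ k • A k l) (∑' k, σ k • A k l) :=
    (summable_smul_of_abs_apply_le_one hσ hs fun k =>
      abs_apply_le_one ((hA k).posSemidef l) (hdiag k l)).hasSum
  have hS : IsOnlineGram fun l => ∑' k, σ k • A k l := .hasSum hsum fun k => (hA k).smul (hσ k)
  have hhalf : ((1 / 2 : ℝ) • (1 : Matrix ι ι ℝ)).PosSemidef := PosSemidef.one.smul (by norm_num)
  refine ⟨fun l => ∑' k, σ k • A k l + (1 / 2 : ℝ) • 1, hS.add (.const hhalf),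
    fun l => posDef_add_smul_one (hS.posSemidef l) (by norm_num), fun l j => ?_, fun k l y => ?_⟩
  · have hentry := Pi.hasSum.1 (Pi.hasSum.1 (hsum l) j) j
    have hle := hasSum_le (fun k => mul_le_of_le_one_right (hσ k) (hdiag k l j)) hentry hs.hasSum
    simp only [Matrix.add_apply, Matrix.smul_apply, one_apply_eq, smul_eq_mul]
    linarith
  · rw [← quadForm_smul]
    calc quadForm (σ k • A k l) y ≤ quadForm (∑' k, σ k • A k l) y :=
          le_hasSum (hasSum_quadForm (hsum l) y) k fun i _ =>
            quadForm_nonneg (((hA i).smul (hσ i)).posSemidef l) y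
      _ ≤ quadForm (∑' k, σ k • A k l + (1 / 2 : ℝ) • 1) y := by
          rw [quadForm_add]
          exact le_add_of_nonneg_right (quadForm_nonneg hhalf y)

lemma exists_onlineGram_of_guess (ι : Type*) [Fintype ι] {σ : ℕ → ℝ}
    (hσ : ∀ k, 0 < σ k) (hs : Summable σ) (hs2 : ∑' k, σ k ≤ 1 / 2) :
    ∃ M : List (ι → ℝ) → Matrix ι ι ℝ, IsOnlineGram M ∧ (∀ l, (M l).PosDef) ∧
      (∀ l j, M l j j ≤ 1) ∧
      ∀ l q q₀ k, (l ++ [q]).head? = some q₀ → 0 < ‖q₀‖ →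
        HasUnitCover ((l ++ [q]).map ((2 ^ (k + 1) * ‖q₀‖)⁻¹ • ·)) → ∀ y,
        (q ⬝ᵥ y) ^ 2 ≤ (2 ^ (k + 1) * ‖q₀‖) ^ 2 *
          (1442 * ((Nat.log 2 (Fintype.card ι) + 1 : ℕ) : ℝ) ^ 6 / σ k) *
            quadForm (M (l ++ [q])) y := by
  obtain ⟨A, hA, hdiag, hcover⟩ := exists_onlineGram_of_hasUnitCover ι
  obtain ⟨M, hM, hpos, hMdiag, hle⟩ := exists_onlineGram_superposition
    (fun k => hA.comp_map_head fun o q => (2 ^ (k + 1) * ‖o.getD 0‖ : ℝ)⁻¹ • q)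
    (fun k l j => hdiag _ j) (fun k => (hσ k).le) hs hs2
  refine ⟨M, hM, hpos, hMdiag, fun l q q₀ k hq₀ hnorm hl y => ?_⟩
  have hleA := hle k (l ++ [q]) y
  simp only [hq₀, Option.getD_some, List.map_append, List.map_cons, List.map_nil] at hl hleA
  set s : ℝ := 2 ^ (k + 1) * ‖q₀‖
  have hs0 : 0 < s := by positivity
  set C : ℝ := 1442 * ((Nat.log 2 (Fintype.card ι) + 1 : ℕ) : ℝ) ^ 6
  have hscaled := hcover _ _ hl y
  rw [smul_dotProduct, smul_eq_mul, inv_mul_eq_div, div_pow, div_le_iff₀ (by positivity)] at hscaled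
  rw [← le_div_iff₀' (hσ k)] at hleA
  calc (q ⬝ᵥ y) ^ 2 ≤ C * (quadForm (M (l ++ [q])) y / σ k) * s ^ 2 :=
        hscaled.trans (by gcongr)
    _ = s ^ 2 * (C / σ k) * quadForm (M (l ++ [q])) y := by ring

end Superposition

section Realization

omit [Fintype ι] in
lemma sum_range_getD {α E : Type*} [AddCommMonoid E] (L : List α) (d : α) (f : α → E) :
    ∑ i ∈ Finset.range L.length, f (L.getD i d) = (L.map f).sum := by
  induction L with
  | nil => simp
  | cons a L ih =>
    rw [List.length_cons, Finset.sum_range_succ', List.map_cons, List.sum_cons, ← ih, add_comm]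
    simp

omit [Fintype ι] in
lemma exists_rows_sum_vecMulVec [Finite ι] {A : Matrix ι ι ℝ} (hA : A.PosSemidef) :
    ∃ L : List (ι → ℝ), (L.map fun v => vecMulVec v v).sum = A := by
  have := Fintype.ofFinite ι
  obtain ⟨R, hR⟩ := exists_eq_transpose_mul_self hA
  refine ⟨Finset.univ.toList.map fun k => R k, ?_⟩
  rw [List.map_map, Finset.sum_map_toList, hR]
  ext i j
  simp [Matrix.sum_apply, vecMulVec_apply, Matrix.mul_apply]

omit [Fintype ι] in
lemma IsOnlineGram.exists_rows [Finite ι] {α : Type*} {M : List α → Matrix ι ι ℝ}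
    (hM : IsOnlineGram M) :
    ∃ rows : List α → List (ι → ℝ), (∀ l, ((rows l).map fun v => vecMulVec v v).sum = M l) ∧
      ∀ l a, rows l <+: rows (l ++ [a]) := by
  refine exists_forall_of_step (Inv := fun l L => (L.map fun v => vecMulVec v v).sum = M l)
    (R := fun _ _ L L' => L <+: L') (exists_rows_sum_vecMulVec (hM.posSemidef []))
    fun l a L hL => ?_
  obtain ⟨D, hD⟩ := exists_rows_sum_vecMulVec (hM.mono l a)
  refine ⟨L ++ D, ?_, List.prefix_append L D⟩
  rw [List.map_append, List.sum_append, hL, hD, add_sub_cancel]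

variable [DecidableEq ι]

lemma quadForm_mulVec_inv {A : Matrix ι ι ℝ} (hA : A.PosDef) (q : ι → ℝ) :
    quadForm A (A⁻¹ *ᵥ q) = quadForm A⁻¹ q := by
  rw [quadForm, mulVec_mulVec, mul_nonsing_inv _ hA.det_pos.ne'.isUnit, one_mulVec,
    dotProduct_comm, quadForm]

lemma quadForm_inv_le {A : Matrix ι ι ℝ} (hA : A.PosDef) {q : ι → ℝ} {C : ℝ} (hC : 0 ≤ C)
    (h : ∀ y, (q ⬝ᵥ y) ^ 2 ≤ C * quadForm A y) : quadForm A⁻¹ q ≤ C := by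
  have hsq := h (A⁻¹ *ᵥ q)
  rw [quadForm_mulVec_inv hA, ← quadForm, sq] at hsq
  by_contra! hlt
  exact hsq.not_gt (mul_lt_mul_of_pos_right hlt (hC.trans_lt hlt))

lemma IsOnlineGram.exists_factorization {M : List (ι → ℝ) → Matrix ι ι ℝ} (hM : IsOnlineGram M)
    (hpos : ∀ l, (M l).PosDef) :
    ∃ (k : List (ι → ℝ) → ℕ) (row : List (ι → ℝ) → ℕ → ι → ℝ) (ℓ : List (ι → ℝ) → ℕ → ℝ),
      (∀ l q, k l ≤ k (l ++ [q]) ∧ (∀ i < k l, row (l ++ [q]) i = row l i) ∧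
        ∀ j, ∑ i ∈ Finset.range (k (l ++ [q])), ℓ (l ++ [q]) i * row (l ++ [q]) i j = q j) ∧
      (∀ l j, ∑ i ∈ Finset.range (k l), row l i j ^ 2 = M l j j) ∧
      ∀ l q, ∑ i ∈ Finset.range (k (l ++ [q])), ℓ (l ++ [q]) i ^ 2 =
        quadForm (M (l ++ [q]))⁻¹ q := by
  obtain ⟨rows, hrows, hprefix⟩ := hM.exists_rows
  let row (l : List (ι → ℝ)) (i : ℕ) : ι → ℝ := (rows l).getD i 0
  have hgram (l) : ∑ i ∈ Finset.range (rows l).length, vecMulVec (row l i) (row l i) = M l := by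
    rw [← hrows l]
    exact sum_range_getD (rows l) 0 fun v => vecMulVec v v
  have hmul (l) (w : ι → ℝ) (j : ι) :
      ∑ i ∈ Finset.range (rows l).length, (row l i ⬝ᵥ w) * row l i j = (M l *ᵥ w) j := by
    rw [← hgram l, sum_mulVec, Finset.sum_apply]
    simp only [vecMulVec_mulVec, op_smul_eq_smul, Pi.smul_apply, smul_eq_mul]
  have hform (l) (w : ι → ℝ) :
      ∑ i ∈ Finset.range (rows l).length, (row l i ⬝ᵥ w) ^ 2 = quadForm (M l) w := by
    simp only [← hgram l, quadForm_sum, quadForm_vecMulVec_self]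
  refine ⟨fun l => (rows l).length, row, fun l i => row l i ⬝ᵥ ((M l)⁻¹ *ᵥ l.getLastD 0),
    fun l q => ⟨(hprefix l q).length_le, fun i hi => ?_, fun j => ?_⟩, fun l j => ?_, fun l q => ?_⟩
  · obtain ⟨D, hD⟩ := hprefix l q
    simp only [row, ← hD]
    exact List.getD_append _ _ _ _ hi
  · simp only [List.getLastD_concat, hmul, mulVec_mulVec,
      mul_nonsing_inv _ (hpos _).det_pos.ne'.isUnit, one_mulVec]
  · rw [← hgram l, Matrix.sum_apply]
    exact Finset.sum_congr rfl fun i _ => by rw [vecMulVec_apply, sq]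
  · simp only [List.getLastD_concat, hform, quadForm_mulVec_inv (hpos _)]

end Realization

section FactorizationNorm

lemma norm_eq_iSup_abs (q : ι → ℝ) : ‖q‖ = ⨆ j, |q j| :=
  le_antisymm
    ((pi_norm_le_iff_of_nonneg (Real.iSup_nonneg fun _ => abs_nonneg _)).2 fun j =>
      le_ciSup (f := fun j => |q j|) (Set.finite_range _).bddAbove j)
    (Real.iSup_le (fun j => norm_le_pi_norm q j) (norm_nonneg q))

variable {α β : Type*} [Fintype α] [Fintype β]

lemma rowNorm2inf_nonneg (M : Matrix α β ℝ) : 0 ≤ rowNorm2inf M :=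
  Real.iSup_nonneg fun _ => Real.sqrt_nonneg _

lemma sum_sq_le_rowNorm2inf_sq (M : Matrix α β ℝ) (i : α) : ∑ j, M i j ^ 2 ≤ rowNorm2inf M ^ 2 :=
  (Real.sqrt_le_left (rowNorm2inf_nonneg M)).1 <|
    le_ciSup (f := fun i => √(∑ j, M i j ^ 2)) (Set.finite_range _).bddAbove i

lemma sum_sq_le_colNorm12_sq (M : Matrix α β ℝ) (j : β) : ∑ i, M i j ^ 2 ≤ colNorm12 M ^ 2 :=
  sum_sq_le_rowNorm2inf_sq Mᵀ j

lemma colNorm12_nonneg (M : Matrix α β ℝ) : 0 ≤ colNorm12 M := rowNorm2inf_nonneg Mᵀ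

lemma gamma2_set_nonempty (A : Matrix α β ℝ) :
    { c : ℝ | ∃ (k : ℕ) (L : Matrix α (Fin k) ℝ) (R : Matrix (Fin k) β ℝ),
      L * R = A ∧ c = rowNorm2inf L * colNorm12 R }.Nonempty := by
  classical
  let e := Fintype.equivFin β
  refine ⟨_, _, A.submatrix id e.symm, (1 : Matrix β β ℝ).submatrix e.symm id, ?_, rfl⟩
  rw [submatrix_mul_equiv, Matrix.mul_one, submatrix_id_id]

lemma gamma2_nonneg (A : Matrix α β ℝ) : 0 ≤ gamma2 A := by
  refine Real.sInf_nonneg ?_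
  rintro _ ⟨k, L, R, -, rfl⟩
  exact mul_nonneg (rowNorm2inf_nonneg L) (colNorm12_nonneg R)

lemma abs_mul_apply_le {κ : Type*} [Fintype κ] (L : Matrix α κ ℝ) (R : Matrix κ β ℝ) (i : α)
    (j : β) : |(L * R) i j| ≤ rowNorm2inf L * colNorm12 R := by
  refine abs_le_of_sq_le_sq ?_ (mul_nonneg (rowNorm2inf_nonneg L) (colNorm12_nonneg R))
  rw [Matrix.mul_apply, mul_pow]
  exact (Finset.sum_mul_sq_le_sq_mul_sq _ _ _).trans <| mul_le_mul
    (sum_sq_le_rowNorm2inf_sq L i) (sum_sq_le_colNorm12_sq R j)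
    (Finset.sum_nonneg fun _ _ => sq_nonneg _) (sq_nonneg _)

lemma norm_row_le_gamma2 (A : Matrix α β ℝ) (i : α) : ‖A i‖ ≤ gamma2 A := by
  refine (pi_norm_le_iff_of_nonneg (gamma2_nonneg A)).2 fun j => ?_
  refine le_csInf (gamma2_set_nonempty A) ?_
  rintro _ ⟨k, L, R, rfl, rfl⟩
  exact abs_mul_apply_le L R i j

lemma sq_mul_dotProduct_le {κ : Type*} [Fintype κ] (L : Matrix α κ ℝ) (R : Matrix κ β ℝ) (i : α)
    (y : β → ℝ) : ((L * R) i ⬝ᵥ y) ^ 2 ≤ rowNorm2inf L ^ 2 * quadForm (Rᵀ * R) y := by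
  have hrow : (L * R) i ⬝ᵥ y = ∑ k, L i k * (R k ⬝ᵥ y) :=
    congrFun (mulVec_mulVec y L R).symm i
  rw [hrow, quadForm_transpose_mul_self]
  exact (Finset.sum_mul_sq_le_sq_mul_sq _ _ _).trans <| mul_le_mul_of_nonneg_right
    (sum_sq_le_rowNorm2inf_sq L i) (Finset.sum_nonneg fun _ _ => sq_nonneg _)

lemma hasUnitCover_of_gamma2_lt {A : Matrix α β ℝ} {s : ℝ} (hs : gamma2 A < s)
    {l : List (β → ℝ)} (hl : ∀ q ∈ l, q ∈ Set.range A) : HasUnitCover (l.map (s⁻¹ • ·)) := by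
  obtain ⟨_, ⟨k, L, R, rfl, rfl⟩, hlt⟩ := exists_lt_of_csInf_lt (gamma2_set_nonempty A) hs
  have hs0 : 0 < s := (gamma2_nonneg _).trans_lt hs
  refine ⟨(rowNorm2inf L / s) ^ 2 • (Rᵀ * R), ⟨?_, fun q hq y _ => ?_⟩, fun j => ?_⟩
  · exact (posSemidef_conjTranspose_mul_self R).smul (sq_nonneg _)
  · obtain ⟨_, hmem, rfl⟩ := List.mem_map.1 hq
    obtain ⟨i, rfl⟩ := hl _ hmem
    rw [smul_dotProduct, smul_eq_mul, mul_pow, quadForm_smul, div_pow, div_eq_inv_mul, inv_pow,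
      mul_assoc]
    exact mul_le_mul_of_nonneg_left (sq_mul_dotProduct_le L R i y) (by positivity)
  · have hdiag : (Rᵀ * R) j j = ∑ a, R a j ^ 2 := by simp [Matrix.mul_apply, sq]
    rw [Matrix.smul_apply, smul_eq_mul, hdiag]
    calc (rowNorm2inf L / s) ^ 2 * ∑ a, R a j ^ 2
        ≤ (rowNorm2inf L / s) ^ 2 * colNorm12 R ^ 2 := by
          gcongr; exact sum_sq_le_colNorm12_sq R j
      _ = (rowNorm2inf L * colNorm12 R / s) ^ 2 := by ring
      _ ≤ 1 := pow_le_one₀ (div_nonneg (mul_nonneg (rowNorm2inf_nonneg L) (colNorm12_nonneg R))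
          hs0.le) ((div_le_one hs0).2 hlt.le)

end FactorizationNorm

section Weights

omit [Fintype ι]

lemma exists_weight_tsum_le {p : ℝ} (hp : 1 < p) : ∃ w : ℝ, 0 < w ∧
    Summable (fun k : ℕ => w / (1 + k : ℝ) ^ p) ∧ ∑' k : ℕ, w / (1 + k : ℝ) ^ p ≤ 1 / 2 := by
  have hs : Summable fun k : ℕ => 1 / (1 + k : ℝ) ^ p := by
    refine ((summable_nat_add_iff 1).2 (Real.summable_one_div_nat_rpow.2 hp)).congr fun k => ?_
    rw [Nat.cast_succ, add_comm]
  set S := ∑' k : ℕ, 1 / (1 + k : ℝ) ^ p with hS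
  have : 0 ≤ S := tsum_nonneg fun k => by positivity
  have hfun (k : ℕ) : 1 / (2 * (S + 1)) / (1 + k : ℝ) ^ p =
      1 / (2 * (S + 1)) * (1 / (1 + k : ℝ) ^ p) := by ring
  refine ⟨1 / (2 * (S + 1)), by positivity, ?_, ?_⟩ <;> simp only [hfun]
  · exact hs.mul_left _
  · rw [tsum_mul_left, ← hS, one_div_mul_eq_div, div_le_div_iff₀ (by positivity) two_pos]
    linarith

lemma exists_guess {u g : ℝ} (hu : 0 < u) (hug : u ≤ g) : ∃ k : ℕ, g < 2 ^ (k + 1) * u ∧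
    2 ^ (k + 1) * u ≤ 4 * g ∧ (1 + k : ℝ) ≤ 2 * (1 + Real.logb 2 (g / u)) := by
  have hone : 1 ≤ g / u := (one_le_div hu).2 hug
  have hlog : 0 ≤ Real.logb 2 (g / u) := Real.logb_nonneg one_lt_two hone
  have hceil := Nat.ceil_lt_add_one hlog
  set k := ⌈Real.logb 2 (g / u)⌉₊
  have hle : g / u ≤ 2 ^ k := by
    rw [← Real.rpow_natCast, ← Real.logb_le_iff_le_rpow one_lt_two (by positivity)]
    exact Nat.le_ceil _
  have hlt : (2 : ℝ) ^ k ≤ 2 * (g / u) := by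
    rw [← Real.rpow_natCast, ← Real.le_logb_iff_rpow_le one_lt_two (by positivity),
      Real.logb_mul two_ne_zero (by positivity), Real.logb_self_eq_one one_lt_two, add_comm]
    exact hceil.le
  rw [div_le_iff₀ hu] at hle
  rw [mul_div_assoc', le_div_iff₀ hu] at hlt
  have : 0 < g := hu.trans_le hug
  exact ⟨k, by rw [pow_succ]; linarith, by rw [pow_succ]; linarith, by linarith⟩

lemma natLog_succ_le_logb {n : ℕ} (hn : 0 < n) :
    ((Nat.log 2 n + 1 : ℕ) : ℝ) ≤ Real.logb 2 (2 * n) := by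
  have hn' : (n : ℝ) ≠ 0 := by exact_mod_cast hn.ne'
  rw [Real.logb_mul two_ne_zero hn', Real.logb_self_eq_one one_lt_two, Nat.cast_succ, add_comm]
  exact add_le_add_right (Real.natLog_le_logb n 2) 1

lemma sqrt_guess_cost_le {w p C H H' k s g x : ℝ} (hp : 0 ≤ p) (hw : 0 < w) (hC : 0 ≤ C)
    (hH : 0 ≤ H) (hHH' : H ≤ H') (hk : 0 ≤ k) (hs : 0 ≤ s) (hsg : s ≤ 4 * g) (hx : 0 ≤ x)
    (hkx : 1 + k ≤ 2 * (1 + x)) :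
    √(s ^ 2 * (C * H ^ 6 / (w / (1 + k) ^ (2 * p)))) ≤
      4 * √(C / w) * 2 ^ p * g * (1 + x) ^ p * H' ^ 3 := by
  have hpow : (1 + k) ^ (2 * p) = ((1 + k) ^ p) ^ 2 := by
    rw [← Real.rpow_mul_natCast (by positivity), Nat.cast_two, mul_comm]
  have hsq : s ^ 2 * (C * H ^ 6 / (w / (1 + k) ^ (2 * p))) =
      C / w * (s * H ^ 3 * (1 + k) ^ p) ^ 2 := by
    rw [hpow]
    field_simp
  have hkp : (1 + k) ^ p ≤ 2 ^ p * (1 + x) ^ p := by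
    rw [← Real.mul_rpow two_pos.le (by positivity)]
    gcongr
  have : 0 ≤ g := by linarith
  have hH' : 0 ≤ H' := hH.trans hHH'
  rw [hsq, Real.sqrt_mul (by positivity), Real.sqrt_sq (by positivity)]
  calc √(C / w) * (s * H ^ 3 * (1 + k) ^ p)
      ≤ √(C / w) * (4 * g * H' ^ 3 * (2 ^ p * (1 + x) ^ p)) := by gcongr
    _ = 4 * √(C / w) * 2 ^ p * g * (1 + x) ^ p * H' ^ 3 := by ring

end Weights

section Competitive

lemma exists_onlineGram_competitive {p : ℝ} (hp : 1 / 2 < p) :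
    ∃ K : ℝ, 0 < K ∧ ∀ (ι : Type*) [Fintype ι] [DecidableEq ι],
    ∃ M : List (ι → ℝ) → Matrix ι ι ℝ, IsOnlineGram M ∧ (∀ l, (M l).PosDef) ∧
      (∀ l j, M l j j ≤ 1) ∧
      ∀ l q q₀ g, (l ++ [q]).head? = some q₀ → q₀ ≠ 0 → ‖q₀‖ ≤ g →
        (∀ s > g, HasUnitCover ((l ++ [q]).map (s⁻¹ • ·))) →
        √(quadForm (M (l ++ [q]))⁻¹ q) ≤
          K * g * (1 + Real.logb 2 (g / ‖q₀‖)) ^ p * Real.logb 2 (2 * Fintype.card ι) ^ 3 := by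
  obtain ⟨w, hw, hs, hs2⟩ := exists_weight_tsum_le (p := 2 * p) (by linarith)
  refine ⟨4 * √(1442 / w) * 2 ^ p, by positivity, fun ι _ _ => ?_⟩
  obtain ⟨M, hM, hpos, hdiag, hbound⟩ :=
    exists_onlineGram_of_guess ι (fun k => by positivity) hs hs2
  refine ⟨M, hM, hpos, hdiag, fun l q q₀ g hhead hq₀ hg hl => ?_⟩
  have hnorm : 0 < ‖q₀‖ := norm_pos_iff.2 hq₀
  obtain ⟨j, -⟩ := Function.ne_iff.1 hq₀
  obtain ⟨k, hlt, hle, hk⟩ := exists_guess hnorm hg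
  have hcost := quadForm_inv_le (hpos _) (by positivity) (hbound l q q₀ k hhead hnorm (hl _ hlt))
  exact (Real.sqrt_le_sqrt hcost).trans <| sqrt_guess_cost_le (by linarith) hw (by norm_num)
    (Nat.cast_nonneg _) (natLog_succ_le_logb (Fintype.card_pos_iff.2 ⟨j⟩)) k.cast_nonneg
    (by positivity) hle (Real.logb_nonneg one_lt_two ((one_le_div hnorm).2 hg)) hk

end Competitive

end OnlineFactorization

/-- An online factorization algorithm in the row arrival model is encoded by functions
of the sequence of rows received so far: `k l` is the number of rows of the current
matrix `R`, `row l i` is its `i`-th row, and `ℓ l` is the current row vector (one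
coordinate per row of `R`). -/
theorem stmt7 (c : ℝ) (hc : 0 < c) :
    ∃ K : ℝ, 0 < K ∧ ∀ N : ℕ,
    ∃ (k : List (Fin N → ℝ) → ℕ) (row : List (Fin N → ℝ) → ℕ → (Fin N → ℝ))
      (ℓ : List (Fin N → ℝ) → ℕ → ℝ),
      -- online structure: `R_t` extends `R_{t-1}` by appending rows, and `ℓ_t R_t = q_t`
      (∀ l q, k l ≤ k (l ++ [q]) ∧
        (∀ i < k l, row (l ++ [q]) i = row l i) ∧
        (∀ j, ∑ i ∈ Finset.range (k (l ++ [q])), ℓ (l ++ [q]) i * row (l ++ [q]) i j = q j)) ∧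
      -- the guarantee, when the algorithm is run on the rows of `Q` with `q₁ ≠ 0`
      (∀ (m : ℕ) (Q : Matrix (Fin m) (Fin N) ℝ) (hm : 1 ≤ m), Q ⟨0, hm⟩ ≠ 0 →
        ∀ (t : ℕ) (ht : t ≤ m), 1 ≤ t →
        ∀ pl : List (Fin N → ℝ), pl = List.ofFn (fun i : Fin t => Q (Fin.castLE ht i)) →
          -- `‖R_t‖_{1→2} ≤ 1`
          (∀ j, Real.sqrt (∑ i ∈ Finset.range (k pl), (row pl i j) ^ 2) ≤ 1) ∧
          -- `‖ℓ_t‖₂ ≤ K·γ₂(Q)·(1+log₂(γ₂(Q)/‖q₁‖_∞))^{1/2+c}·(log₂ 2N)³`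
          Real.sqrt (∑ i ∈ Finset.range (k pl), (ℓ pl i) ^ 2) ≤
            K * gamma2 Q *
              (1 + Real.logb 2 (gamma2 Q / (⨆ j, |Q ⟨0, hm⟩ j|))) ^ ((1 : ℝ) / 2 + c) *
              (Real.logb 2 (2 * N)) ^ 3) := by
  obtain ⟨K, hK, hgram⟩ := OnlineFactorization.exists_onlineGram_competitive (p := 1 / 2 + c)
    (by linarith)
  refine ⟨K, hK, fun N => ?_⟩
  obtain ⟨M, hM, hpos, hdiag, hbound⟩ := hgram (Fin N)
  obtain ⟨k, row, ℓ, honline, hrow, hℓ⟩ := hM.exists_factorization hpos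
  refine ⟨k, row, ℓ, honline, fun m Q hm hQ t ht ht1 pl hpl => ⟨fun j => ?_, ?_⟩⟩
  · rw [hrow]
    exact Real.sqrt_le_one.2 (hdiag pl j)
  obtain ⟨t, rfl⟩ := Nat.exists_eq_add_of_le' ht1
  have hhead : pl.head? = some (Q ⟨0, hm⟩) := by
    rw [hpl, List.ofFn_succ, List.head?_cons]
    rfl
  have hmem (q) (hq : q ∈ pl) : q ∈ Set.range Q := by
    obtain ⟨i, rfl⟩ := List.mem_ofFn.1 (hpl ▸ hq)
    exact Set.mem_range_self _
  obtain ⟨l, q, rfl⟩ : ∃ l q, pl = l ++ [q] :=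
    ⟨_, _, hpl.trans ((List.ofFn_succ' _).trans List.concat_eq_append)⟩
  rw [hℓ, ← OnlineFactorization.norm_eq_iSup_abs]
  simpa only [Fintype.card_fin] using hbound l q _ _ hhead hQ
    (OnlineFactorization.norm_row_le_gamma2 Q _) fun s hs =>
      OnlineFactorization.hasUnitCover_of_gamma2_lt hs hmem
end
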